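/- (Theorem B, case ν = −1) Let μ ≥ 1 be an odd integer and ν = −1, let j ∈ ℕ, and let u : ℝ_+ → ℝ be a smooth function in L²(ℝ_+, x^{μ}dx) satisfying D_{μ,−1}u = 4j(j+μ+1)u on ℝ_+. Suppose the limit B := lim_{x→0+} u(x) exists. Then for all ϑ, φ ∈ [0,π] with cos ϑ + cos φ > 0, ∫₀^∞ u(x) J̃_{μ/2}(ax) J̃_{−1/2}(bx) x^{μ} dx = A · ((cos ϑ + cos φ)/2)^{(μ+1)/2} · C̃_j^{(μ+1)/2}(cos ϑ) · C̃_{j+(μ+1)/2}^{0}(cos φ), where a = sin ϑ/(cos ϑ + cos φ), b = sin φ/(cos ϑ + cos φ), and the constant A equals A = (−1)^j · (j! 2^{2μ−1} Γ((μ+2)/2) Γ((μ+1)/2) Γ(j+(μ+3)/2))/(Γ(j+(μ+1)/2) π Γ(j+μ+1)) · (−2/Γ(−1/2)) · B. -/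

import Mathlib

open MeasureTheory Real Filter Set Metric

noncomputable section

/-- Normalized Bessel function of the first kind: `J̃_α(x) = (x/2)^{-α} J_α(x)`,
given by its (entire) power series. -/
def besselJt (α x : ℝ) : ℝ :=
  ∑' m : ℕ, (-1) ^ m / (m.factorial * Real.Gamma (m + α + 1)) * (x / 2) ^ (2 * m)

/-- Bessel function of the first kind `J_α`. -/
def besselJ (α x : ℝ) : ℝ :=
  ∑' m : ℕ, (-1) ^ m / (m.factorial * Real.Gamma (m + α + 1)) * (x / 2) ^ (2 * (m : ℝ) + α)

/-- Normalized modified Bessel function `Ĩ_α(x) = (x/2)^{-α} I_α(x)`,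
given by its (entire, even) power series. -/
def besselIt (α x : ℝ) : ℝ :=
  ∑' m : ℕ, (x / 2) ^ (2 * m) / (m.factorial * Real.Gamma (m + α + 1))

/-- Modified Bessel function of the first kind `I_α`. -/
def besselI (α x : ℝ) : ℝ :=
  ∑' m : ℕ, (x / 2) ^ (2 * (m : ℝ) + α) / (m.factorial * Real.Gamma (m + α + 1))

/-- Modified Bessel function of the second kind,
`K_α(x) = lim_{β→α} (π/2)(I_{−β}(x) − I_β(x))/sin(βπ)`. -/
def besselK (α x : ℝ) : ℝ :=
  limUnder (nhdsWithin α {α}ᶜ) fun β =>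
    Real.pi / 2 * (besselI (-β) x - besselI β x) / Real.sin (β * Real.pi)

/-- Normalized K-Bessel function `K̃_α(x) = (x/2)^{-α} K_α(x)`. -/
def besselKt (α x : ℝ) : ℝ := (x / 2) ^ (-α) * besselK α x

/-- Normalized Gegenbauer polynomial `C̃_n^λ = Γ(λ) C_n^λ`, where `C_n^λ` is defined via the
generating function `(1 − 2xt + t²)^{−λ} = Σ_{n≥0} C_n^λ(x) tⁿ`; explicitly,
`C̃_n^λ(x) = Σ_{k=0}^{⌊n/2⌋} (−1)^k Γ(λ+n−k)/(k!(n−2k)!) (2x)^{n−2k}`.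
This expression also gives the limit value `C̃_n^0 = lim_{λ→0+} Γ(λ) C_n^λ` for `n ≥ 1`. -/
def gegenbauerCt (n : ℕ) (l x : ℝ) : ℝ :=
  ∑ k ∈ Finset.range (n / 2 + 1),
    (-1) ^ k * Real.Gamma (l + n - k) / (k.factorial * (n - 2 * k).factorial)
      * (2 * x) ^ (n - 2 * k)

/-- Laguerre polynomial `L_n^μ(x) = Σ_{k=0}^n (−1)^k binom(n+μ, n−k) x^k/k!`
(with nonnegative integer parameter `μ`). -/
def laguerreL (n μ : ℕ) (x : ℝ) : ℝ :=
  ∑ k ∈ Finset.range (n + 1),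
    (-1) ^ k * (Nat.choose (n + μ) (n - k)) * x ^ k / k.factorial

/-- The Euler operator `θ = x d/dx`. -/
def eulerOp (u : ℝ → ℝ) : ℝ → ℝ := fun x => x * deriv u x

/-- `(θ+c)(θ+c+ν)u − x² u`, i.e. the operator `Q_ν(θ+c)` applied to `u`. -/
def besselQ (ν c : ℝ) (u : ℝ → ℝ) : ℝ → ℝ := fun x =>
  eulerOp (fun y => eulerOp u y + (c + ν) * u y) x
    + c * (eulerOp u x + (c + ν) * u x) - x ^ 2 * u x

/-- The fourth order differential operator
`D_{μ,ν} = x^{−2}((θ+μ)(θ+μ+ν) − x²)(θ(θ+ν) − x²)`. -/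
def Dop (μ ν : ℝ) (u : ℝ → ℝ) : ℝ → ℝ := fun x =>
  besselQ ν μ (besselQ ν 0 u) x / x ^ 2

/-- The generating function
`G^{μ,ν}(t,x) = (1−t)^{−(μ+ν+2)/2} Ĩ_{μ/2}(tx/(1−t)) K̃_{ν/2}(x/(1−t))`. -/
def genFun (μ ν t x : ℝ) : ℝ :=
  (1 - t) ^ (-(μ + ν + 2) / 2) * besselIt (μ / 2) (t * x / (1 - t))
    * besselKt (ν / 2) (x / (1 - t))

/-- The eigenfunctions `Λ_j^{μ,ν}`, defined as the Taylor coefficients in `t` at `t = 0` of the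
generating function `G^{μ,ν}(t,x) = Σ_{j≥0} Λ_j^{μ,ν}(x) t^j`. -/
def LambdaF (μ ν : ℝ) (j : ℕ) (x : ℝ) : ℝ :=
  iteratedDeriv j (fun t => genFun μ ν t x) 0 / j.factorial

/-- The integrality condition: `μ ≥ ν ≥ −1` are integers of the same parity,
not both equal to `−1`. -/
def IntCond (μ ν : ℤ) : Prop :=
  -1 ≤ ν ∧ ν ≤ μ ∧ Even (μ - ν) ∧ ¬(μ = -1 ∧ ν = -1)

end

/-!
For `ν = -1` the fourth-order operator is a shifted square: with `L f = x f'' + (μ + 1) f' - x f`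
one has `L² = D_{μ,-1} + (μ + 1)²`, so the eigenvalue equation reads `L² u = c² u` with
`c = 2j + μ + 1`, and the Laguerre function `ℓ(x) = e^{-x} L_j^μ(2x)` satisfies `L ℓ = -c ℓ`.

* `q = L u - c u` solves `L q = -c q`. Its Wronskian with `ℓ` is a constant `k`; for `k ≠ 0` the
  quotient `q / ℓ` would grow so fast that `u ℓ x^μ` could not be integrable. Hence `q = a ℓ`.
* `p = L u + c u = a ℓ + 2 c u` solves `L p = c p` and is square integrable and bounded near `0`.
  The flux of `p²` is monotone: positive values contradict integrability at infinity, negative ones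
  make `p²` blow up logarithmically at `0`. Hence `p = 0` and `u` is a multiple of `ℓ`, the factor
  being read off at `0`.

For `u = ℓ` the integral is the real part of a Laplace transform at `1 + ib`, because `J̃_{-1/2}` is
a cosine. When `μ = 2N + 1`, the transform of `x^μ J̃_{μ/2}(ax)` is a multiple of
`(p² + a²)^{-(N+1)}`. Summing over `j` with the generating function of the Laguerre polynomials
amounts to the substitution `p ↦ p + 2t / (1 - t)`, which turns this power of a quadratic into the
Gegenbauer generating function at `-e^{-iφ} t`; the remaining phase `e^{-i(j+N+1)φ}` has real part
proportional to `C̃_{j+N+1}^0(cos φ)`.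
-/

section PowerSeries

open PowerSeries

variable {R : Type*} [CommRing R]

theorem coeff_mul_subst (H P h : R⟦X⟧) (n : ℕ) :
    coeff n (H * P.subst (X * h)) =
      ∑ k ∈ Finset.range (n + 1), coeff k P * coeff (n - k) (H * h ^ k) := by
  have hsubst : HasSubst (X * h) := HasSubst.of_constantCoeff_zero' (by simp)
  have coeff_subst_eq (m : ℕ) (hm : m ≤ n) : coeff m (P.subst (X * h)) =
      ∑ k ∈ Finset.range (n + 1), coeff k P * coeff m ((X * h) ^ k) := by
    rw [coeff_subst' hsubst, finsum_eq_sum_of_support_subset]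
    · rfl
    · intro k hk
      by_contra hkn
      simp only [Finset.coe_range, Set.mem_Iio, not_lt] at hkn
      refine hk ?_
      simp [mul_pow, coeff_X_pow_mul', show ¬ k ≤ m by omega]
  rw [coeff_mul, Finset.sum_congr rfl fun m hm =>
    congrArg _ (coeff_subst_eq m.2 (Finset.HasAntidiagonal.antidiagonal.snd_le hm))]
  simp only [Finset.mul_sum]
  rw [Finset.sum_comm]
  refine Finset.sum_congr rfl fun k hk => ?_
  rw [show coeff (n - k) (H * h ^ k) = coeff n (H * (X * h) ^ k) by
    rw [mul_pow, mul_left_comm, coeff_X_pow_mul', if_pos (Finset.mem_range_succ_iff.mp hk)],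
    coeff_mul, Finset.mul_sum]
  exact Finset.sum_congr rfl fun m _ => by ring

theorem coeff_C_sub_X_pow (c : R) (s k : ℕ) :
    coeff k ((C c - X) ^ s) = (-1) ^ k * s.choose k * c ^ (s - k) := by
  have hcoe : (C c - X) ^ s =
      C ((-1) ^ s) * (((Polynomial.X + Polynomial.C (-c)) ^ s : Polynomial R) : R⟦X⟧) := by
    simp [← mul_pow, ← sub_eq_add_neg]
  rw [hcoe, coeff_C_mul, Polynomial.coeff_coe, Polynomial.coeff_X_add_C_pow]
  rcases le_or_gt k s with hk | hk
  · obtain ⟨m, rfl⟩ := Nat.exists_eq_add_of_le hk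
    rw [Nat.add_sub_cancel_left, neg_pow c, pow_add]
    linear_combination ((-1) ^ k * c ^ m * (k + m).choose k : R) *
      (Even.neg_one_pow ⟨m, rfl⟩ : (-1 : R) ^ (m + m) = 1)
  · simp [Nat.choose_eq_zero_of_lt hk]

end PowerSeries

section Gegenbauer

open PowerSeries

/-- The power series `∑ Γ(l + s) / s! Xˢ`, which is `Γ(l) (1 - X)^{-l}` for `l > 0` and
`-log (1 - X)` for `l = 0`, the constant term then being the junk value `Γ(0) = 0`. -/
noncomputable def gammaSeries (l : ℝ) : ℝ⟦X⟧ := mk fun s => Real.Gamma (l + s) / s.factorial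

theorem derivative_gammaSeries (l : ℝ) : d⁄dX ℝ (gammaSeries l) = gammaSeries (l + 1) := by
  ext n
  simp only [gammaSeries, coeff_derivative, coeff_mk, Nat.factorial_succ]
  push_cast
  rw [show l + (n + 1) = l + 1 + n by ring]
  field_simp

theorem gammaSeries_natCast_add_one_mul (N : ℕ) :
    gammaSeries (N + 1) * (1 - X) ^ (N + 1) = C (N.factorial : ℝ) := by
  have heq : gammaSeries (N + 1) = C (N.factorial : ℝ) * mk fun n => ((N + n).choose N : ℝ) := by
    ext n
    simp only [gammaSeries, coeff_mk, coeff_C_mul]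
    rw [show (N : ℝ) + 1 + n = (N + n : ℕ) + 1 by push_cast; ring, Real.Gamma_nat_eq_factorial,
      Nat.cast_add_choose]
    field_simp
  rw [heq, mul_assoc, mk_add_choose_mul_one_sub_pow_eq_one, mul_one]

/-- The generating function of the normalized Gegenbauer polynomials `C̃_n^l(x)`. -/
noncomputable def gegenbauerSeries (l x : ℝ) : ℝ⟦X⟧ := mk fun n => gegenbauerCt n l x

theorem gegenbauerSeries_eq_subst (l x : ℝ) :
    gegenbauerSeries l x = (gammaSeries l).subst (X * (C (2 * x) - X)) := by
  ext n
  rw [← one_mul ((gammaSeries l).subst _), coeff_mul_subst, gegenbauerSeries, coeff_mk,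
    gegenbauerCt]
  symm
  rw [← Finset.sum_range_reflect,
    ← Finset.sum_subset (Finset.range_mono (by omega : n / 2 + 1 ≤ n + 1))]
  · refine Finset.sum_congr rfl fun k hk => ?_
    have hkn : 2 * k ≤ n := by have := Finset.mem_range.mp hk; omega
    obtain ⟨m, rfl⟩ := Nat.exists_eq_add_of_le hkn
    rw [one_mul, coeff_C_sub_X_pow, gammaSeries, coeff_mk,
      show 2 * k + m + 1 - 1 - k = k + m by omega, show 2 * k + m - (k + m) = k by omega,
      show 2 * k + m - 2 * k = m by omega, Nat.add_sub_cancel_left, Nat.cast_add_choose,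
      show l + (2 * k + m : ℕ) - k = l + (k + m : ℕ) by push_cast; ring]
    push_cast
    field_simp
  · intro k hkn hk
    simp only [Finset.mem_range] at hkn hk
    rw [one_mul, coeff_C_sub_X_pow, Nat.choose_eq_zero_of_lt (by omega)]
    simp

theorem gegenbauerSeries_natCast_add_one_mul (N : ℕ) (x : ℝ) :
    gegenbauerSeries (N + 1) x * (1 - C (2 * x) * X + X ^ 2) ^ (N + 1) =
      C (N.factorial : ℝ) := by
  have hsubst : HasSubst (X * (C (2 * x) - X) : ℝ⟦X⟧) :=
    HasSubst.of_constantCoeff_zero' (by simp)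
  have h := congrArg (subst (X * (C (2 * x) - X) : ℝ⟦X⟧)) (gammaSeries_natCast_add_one_mul N)
  rw [← coe_substAlgHom hsubst, map_mul, map_pow, map_sub, map_one, substAlgHom_X,
    coe_substAlgHom, ← gegenbauerSeries_eq_subst, subst_C] at h
  calc
    _ = gegenbauerSeries (N + 1) x * (1 - X * (C (2 * x) - X)) ^ (N + 1) := by ring
    _ = _ := h

theorem derivative_gegenbauerSeries (l x : ℝ) :
    d⁄dX ℝ (gegenbauerSeries l x) = gegenbauerSeries (l + 1) x * (C (2 * x) - 2 * X) := by
  have hsubst : HasSubst (X * (C (2 * x) - X) : ℝ⟦X⟧) :=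
    HasSubst.of_constantCoeff_zero' (by simp)
  rw [gegenbauerSeries_eq_subst, derivative_subst hsubst, derivative_gammaSeries,
    ← gegenbauerSeries_eq_subst]
  simp only [map_mul, Derivation.leibniz, map_sub, derivative_X, derivative_C, smul_eq_mul]
  ring

theorem mk_two_cos_mul (φ : ℝ) :
    (PowerSeries.mk fun n => 2 * Real.cos ((n + 1) * φ)) * (1 - C (2 * Real.cos φ) * X + X ^ 2) =
      C (2 * Real.cos φ) - 2 * X := by
  set F : ℝ⟦X⟧ := PowerSeries.mk fun n => 2 * Real.cos ((n + 1) * φ) with hF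
  have hexpand : F * (1 - C (2 * Real.cos φ) * X + X ^ 2) =
      F - C (2 * Real.cos φ) * (F * X) + F * X ^ 2 := by ring
  have htwo : (2 : ℝ⟦X⟧) = C 2 := (map_ofNat C 2).symm
  rw [hexpand, htwo]
  ext n
  match n with
  | 0 => simp [hF]
  | 1 =>
    have hcos : Real.cos ((1 + 1) * φ) = 2 * Real.cos φ ^ 2 - 1 := by
      rw [one_add_one_eq_two, Real.cos_two_mul]
    simp only [hF, map_add, map_sub, coeff_mk, coeff_C_mul, coeff_succ_mul_X, coeff_C,
      coeff_mul_X_pow', Nat.cast_one, Nat.cast_zero, hcos]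
    norm_num
    ring
  | n + 2 =>
    have hsum : Real.cos ((n + 3) * φ) + Real.cos ((n + 1) * φ) =
        2 * Real.cos ((n + 2) * φ) * Real.cos φ := by
      rw [Real.cos_add_cos]
      ring_nf
    simp only [hF, map_add, map_sub, coeff_mk, coeff_C_mul, coeff_succ_mul_X, coeff_mul_X_pow,
      coeff_C, Nat.cast_add, Nat.cast_one, Nat.cast_ofNat]
    norm_num
    ring_nf at hsum ⊢
    linear_combination 2 * hsum

theorem succ_mul_gegenbauerCt_succ_zero_cos (n : ℕ) (φ : ℝ) :
    (n + 1) * gegenbauerCt (n + 1) 0 (Real.cos φ) = 2 * Real.cos ((n + 1) * φ) := by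
  set Q : ℝ⟦X⟧ := 1 - C (2 * Real.cos φ) * X + X ^ 2 with hQ
  have hQ0 : Q ≠ 0 := fun h => by simpa [hQ] using congrArg constantCoeff h
  have hderiv : d⁄dX ℝ (gegenbauerSeries 0 (Real.cos φ)) * Q = C (2 * Real.cos φ) - 2 * X := by
    have h := gegenbauerSeries_natCast_add_one_mul 0 (Real.cos φ)
    rw [derivative_gegenbauerSeries]
    simp only [Nat.cast_zero, zero_add, pow_one, Nat.factorial_zero, Nat.cast_one, map_one] at h ⊢
    linear_combination (C (2 * Real.cos φ) - 2 * X) * h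
  have h := congrArg (coeff n) (mul_right_cancel₀ hQ0 (hderiv.trans (mk_two_cos_mul φ).symm))
  rwa [coeff_derivative, gegenbauerSeries, coeff_mk, coeff_mk, mul_comm] at h

end Gegenbauer

section Bessel

/-- The coefficients of the power series of `J̃_α`. At the poles of `Γ` the convention `1 / 0 = 0`
gives the value of the entire function `1 / Γ`. -/
noncomputable def besselCoeff (α : ℝ) (m : ℕ) : ℝ :=
  (-1) ^ m / (m.factorial * Real.Gamma (m + α + 1))

theorem inv_Gamma_eq_mul_inv_Gamma_add_one (s : ℝ) :
    (Real.Gamma s)⁻¹ = s * (Real.Gamma (s + 1))⁻¹ := by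
  rcases eq_or_ne s 0 with rfl | hs
  · simp [Real.Gamma_zero]
  · rw [Real.Gamma_add_one hs, mul_inv, mul_inv_cancel_left₀ hs]

theorem besselCoeff_sub_one (α : ℝ) (m : ℕ) :
    besselCoeff (α - 1) m = (m + α) * besselCoeff α m := by
  rw [besselCoeff, besselCoeff, show (m : ℝ) + (α - 1) + 1 = m + α by ring, div_eq_mul_inv,
    mul_inv, inv_Gamma_eq_mul_inv_Gamma_add_one]
  field_simp

theorem succ_mul_besselCoeff_succ (α : ℝ) (m : ℕ) :
    (m + 1) * besselCoeff α (m + 1) = -besselCoeff (α + 1) m := by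
  rw [besselCoeff, besselCoeff, Nat.factorial_succ, pow_succ]
  push_cast
  rw [show (m : ℝ) + 1 + α + 1 = m + (α + 1) + 1 by ring]
  field_simp

theorem exists_abs_besselCoeff_le (α : ℝ) : ∃ C, ∀ m, |besselCoeff α m| ≤ C / m.factorial := by
  have heventually : ∀ᶠ m : ℕ in atTop, |(Real.Gamma (m + α + 1))⁻¹| ≤ 1 := by
    have hlarge : ∀ᶠ m : ℕ in atTop, 1 - α ≤ m :=
      tendsto_natCast_atTop_atTop.eventually_ge_atTop _
    filter_upwards [hlarge] with m hm
    have hGamma : 1 ≤ Real.Gamma (m + α + 1) := by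
      have htwo : 2 ≤ m + α + 1 := by linarith
      exact Real.Gamma_two.symm.trans_le
        (Real.Gamma_strictMonoOn_Ici.monotoneOn self_mem_Ici htwo htwo)
    rw [abs_of_pos (by positivity)]
    exact inv_le_one_of_one_le₀ hGamma
  obtain ⟨C, hC⟩ := (isBoundedUnder_of_eventually_le heventually).bddAbove_range
  refine ⟨C, fun m => ?_⟩
  rw [besselCoeff, abs_div, abs_pow, abs_neg, abs_one, one_pow, abs_mul, Nat.abs_cast, ← div_div,
    div_right_comm, one_div, ← abs_inv]
  gcongr
  exact hC (mem_range_self m)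

theorem summable_besselCoeff_mul_pow (α x : ℝ) :
    Summable fun m => besselCoeff α m * (x / 2) ^ (2 * m) := by
  obtain ⟨C, hC⟩ := exists_abs_besselCoeff_le α
  refine Summable.of_norm_bounded
    ((Real.summable_pow_div_factorial ((x / 2) ^ 2)).mul_left C) fun m => ?_
  rw [pow_mul, norm_mul, Real.norm_eq_abs, Real.norm_of_nonneg (by positivity)]
  calc _ ≤ C / m.factorial * ((x / 2) ^ 2) ^ m := by gcongr; exact hC m
    _ = _ := by ring

theorem besselJt_eq_tsum (α x : ℝ) :
    besselJt α x = ∑' m, besselCoeff α m * (x / 2) ^ (2 * m) :=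
  rfl

theorem besselJt_eq_zero_add (α x : ℝ) :
    besselJt α x = besselCoeff α 0 + ∑' m, besselCoeff α (m + 1) * (x / 2) ^ (2 * (m + 1)) := by
  rw [besselJt_eq_tsum, (summable_besselCoeff_mul_pow α x).tsum_eq_zero_add, mul_zero, pow_zero,
    mul_one]

theorem hasDerivAt_besselJt (α x : ℝ) :
    HasDerivAt (besselJt α) (-(x / 2) * besselJt (α + 1) x) x := by
  obtain ⟨C, hC⟩ := exists_abs_besselCoeff_le (α + 1)
  set ρ : ℝ := |x| + 1
  have hterm (m : ℕ) (y : ℝ) :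
      HasDerivAt (fun y => besselCoeff α (m + 1) * (y / 2) ^ (2 * (m + 1)))
        (-(y / 2) * (besselCoeff (α + 1) m * (y / 2) ^ (2 * m))) y := by
    refine ((((hasDerivAt_id y).div_const 2).pow (2 * (m + 1))).const_mul
      (besselCoeff α (m + 1))).congr_deriv ?_
    rw [show 2 * (m + 1) - 1 = 2 * m + 1 by omega]
    push_cast
    simp only [id_eq]
    linear_combination (y / 2) ^ (2 * m + 1) * succ_mul_besselCoeff_succ α m
  have hbound (m : ℕ) (y : ℝ) (hy : y ∈ ball (0 : ℝ) ρ) :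
      ‖-(y / 2) * (besselCoeff (α + 1) m * (y / 2) ^ (2 * m))‖ ≤
        ρ / 2 * C * (((ρ / 2) ^ 2) ^ m / m.factorial) := by
    have hy' : |y / 2| ≤ ρ / 2 := by
      rw [mem_ball_zero_iff, Real.norm_eq_abs] at hy
      rw [abs_div, abs_two]
      linarith
    rw [norm_mul, norm_mul, norm_neg, norm_pow, Real.norm_eq_abs, Real.norm_eq_abs]
    calc _ ≤ ρ / 2 * (C / m.factorial * (ρ / 2) ^ (2 * m)) := by
          gcongr
          · exact (abs_nonneg _).trans (hC m)
          · exact hC m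
      _ = _ := by rw [pow_mul]; ring
  have hx : x ∈ ball (0 : ℝ) ρ := by simp [ρ]
  have hsum := hasDerivAt_tsum_of_isPreconnected
    ((Real.summable_pow_div_factorial _).mul_left _) isOpen_ball
    (convex_ball (0 : ℝ) ρ).isPreconnected (fun m y _ => hterm m y) hbound hx
    ((summable_nat_add_iff 1).mpr (summable_besselCoeff_mul_pow α x)) hx
  rw [tsum_mul_left, ← besselJt_eq_tsum] at hsum
  exact (hsum.const_add (besselCoeff α 0)).congr_of_eventuallyEq
    (.of_forall fun y => besselJt_eq_zero_add α y)

theorem mul_besselJt (α x : ℝ) :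
    α * besselJt α x = besselJt (α - 1) x + (x / 2) ^ 2 * besselJt (α + 1) x := by
  have htail (m : ℕ) : besselCoeff (α - 1) (m + 1) * (x / 2) ^ (2 * (m + 1)) =
      α * (besselCoeff α (m + 1) * (x / 2) ^ (2 * (m + 1))) -
        (x / 2) ^ 2 * (besselCoeff (α + 1) m * (x / 2) ^ (2 * m)) := by
    rw [besselCoeff_sub_one]
    push_cast
    linear_combination (x / 2) ^ (2 * (m + 1)) * succ_mul_besselCoeff_succ α m
  rw [besselJt_eq_zero_add (α - 1), tsum_congr htail, Summable.tsum_sub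
    (((summable_nat_add_iff 1).mpr (summable_besselCoeff_mul_pow α x)).mul_left α)
    ((summable_besselCoeff_mul_pow (α + 1) x).mul_left _), tsum_mul_left, tsum_mul_left,
    besselCoeff_sub_one, besselJt_eq_zero_add α, besselJt_eq_tsum (α + 1)]
  push_cast
  ring

theorem besselJt_neg_half (x : ℝ) : besselJt (-(1 / 2)) x = Real.cos x / √π := by
  rw [Real.cos_eq_tsum, besselJt, ← tsum_div_const]
  refine tsum_congr fun m => ?_
  have hdup : Real.Gamma (m + 1 / 2) * m.factorial = (2 * m).factorial / 2 ^ (2 * m) * √π := by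
    have h := Real.Gamma_mul_Gamma_add_half (m + 1 / 2)
    rwa [show (m : ℝ) + 1 / 2 + 1 / 2 = m + 1 by ring,
      show 2 * ((m : ℝ) + 1 / 2) = (2 * m : ℕ) + 1 by push_cast; ring,
      Real.Gamma_nat_eq_factorial, Real.Gamma_nat_eq_factorial, sub_add_cancel_right,
      Real.rpow_neg two_pos.le, Real.rpow_natCast, ← div_eq_mul_inv] at h
  rw [show (m : ℝ) + -(1 / 2) + 1 = m + 1 / 2 by ring, mul_comm (m.factorial : ℝ), hdup, div_pow]
  field_simp

theorem hasDerivAt_pow_mul_besselJt {n : ℕ} {α : ℝ} (hα : 2 * α = n + 1) (a x : ℝ) :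
    HasDerivAt (fun x => x ^ (n + 1) * besselJt α (a * x))
      (2 * x ^ n * besselJt (α - 1) (a * x)) x := by
  refine ((hasDerivAt_pow (n + 1) x).mul
    ((hasDerivAt_besselJt α (a * x)).comp x ((hasDerivAt_id x).const_mul a))).congr_deriv ?_
  simp only [Function.comp_apply, Nat.add_sub_cancel]
  push_cast
  linear_combination 2 * x ^ n * mul_besselJt α (a * x) - x ^ n * besselJt α (a * x) * hα

end Bessel

section PolynomialGrowth

/-- A continuous function on `ℝ` with at most polynomial growth on `[0, ∞)`. -/
structure HasPolynomialGrowth (f : ℝ → ℝ) : Prop where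
  continuous : Continuous f
  exists_bound : ∃ (C : ℝ) (n : ℕ), ∀ x, 0 ≤ x → |f x| ≤ C * (1 + x) ^ n

namespace HasPolynomialGrowth

variable {f g : ℝ → ℝ}

theorem mul (hf : HasPolynomialGrowth f) (hg : HasPolynomialGrowth g) :
    HasPolynomialGrowth fun x => f x * g x := by
  obtain ⟨C, n, hC⟩ := hf.exists_bound
  obtain ⟨D, m, hD⟩ := hg.exists_bound
  refine ⟨hf.continuous.mul hg.continuous, C * D, n + m, fun x hx => ?_⟩
  calc |f x * g x| = |f x| * |g x| := abs_mul _ _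
    _ ≤ C * (1 + x) ^ n * (D * (1 + x) ^ m) :=
      mul_le_mul (hC x hx) (hD x hx) (abs_nonneg _) ((abs_nonneg _).trans (hC x hx))
    _ = C * D * (1 + x) ^ (n + m) := by ring

theorem add (hf : HasPolynomialGrowth f) (hg : HasPolynomialGrowth g) :
    HasPolynomialGrowth fun x => f x + g x := by
  obtain ⟨C, n, hC⟩ := hf.exists_bound
  obtain ⟨D, m, hD⟩ := hg.exists_bound
  have hC0 : 0 ≤ C := by simpa using (abs_nonneg _).trans (hC 0 le_rfl)
  have hD0 : 0 ≤ D := by simpa using (abs_nonneg _).trans (hD 0 le_rfl)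
  refine ⟨hf.continuous.add hg.continuous, C + D, max n m, fun x hx => ?_⟩
  have hone : 1 ≤ 1 + x := by linarith
  calc |f x + g x| ≤ |f x| + |g x| := abs_add_le _ _
    _ ≤ C * (1 + x) ^ n + D * (1 + x) ^ m := add_le_add (hC x hx) (hD x hx)
    _ ≤ C * (1 + x) ^ max n m + D * (1 + x) ^ max n m := by
      gcongr
      exacts [le_max_left n m, le_max_right n m]
    _ = (C + D) * (1 + x) ^ max n m := by ring

theorem of_abs_le (hf : Continuous f) (C : ℝ) (hC : ∀ x, |f x| ≤ C) : HasPolynomialGrowth f :=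
  ⟨hf, C, 0, fun x _ => by simpa using hC x⟩

theorem id : HasPolynomialGrowth fun x => x :=
  ⟨continuous_id, 1, 1, fun x hx => by rw [abs_of_nonneg hx]; linarith⟩

theorem const (c : ℝ) : HasPolynomialGrowth fun _ => c :=
  of_abs_le continuous_const |c| fun _ => le_rfl

theorem pow (n : ℕ) : HasPolynomialGrowth fun x => x ^ n := by
  induction n with
  | zero => simpa using const 1
  | succ n ih => simpa only [pow_succ] using ih.mul id

theorem polynomial_eval (P : Polynomial ℝ) : HasPolynomialGrowth fun x => P.eval x := by
  induction P using Polynomial.induction_on' with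
  | add P Q hP hQ => simpa only [Polynomial.eval_add] using hP.add hQ
  | monomial n c => simpa only [Polynomial.eval_monomial] using (const c).mul (pow n)

theorem of_hasDerivAt {f' : ℝ → ℝ} (hderiv : ∀ x, HasDerivAt f (f' x) x)
    (hf' : HasPolynomialGrowth f') : HasPolynomialGrowth f := by
  obtain ⟨C, n, hC⟩ := hf'.exists_bound
  have hC0 : 0 ≤ C := by simpa using (abs_nonneg _).trans (hC 0 le_rfl)
  refine ⟨continuous_iff_continuousAt.mpr fun x => (hderiv x).continuousAt, |f 0| + C, n + 1,
    fun x hx => ?_⟩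
  have hmvt : |f x - f 0| ≤ C * (1 + x) ^ n * |x - 0| := by
    refine (convex_Icc 0 x).norm_image_sub_le_of_norm_hasDerivWithin_le
      (fun y _ => (hderiv y).hasDerivWithinAt) (fun y hy => (hC y hy.1).trans ?_)
      (left_mem_Icc.mpr hx) (right_mem_Icc.mpr hx)
    have := hy.2
    have := hy.1
    gcongr
  have hone : 1 ≤ (1 + x) ^ (n + 1) := one_le_pow₀ (by linarith)
  have hpow : (1 + x) ^ n * x ≤ (1 + x) ^ (n + 1) := by
    rw [pow_succ]
    gcongr
    linarith
  rw [sub_zero, abs_of_nonneg hx] at hmvt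
  calc |f x| ≤ |f 0| + |f x - f 0| := by linarith [abs_sub_abs_le_abs_sub (f x) (f 0)]
    _ ≤ |f 0| * 1 + C * ((1 + x) ^ n * x) := by linarith
    _ ≤ (|f 0| + C) * (1 + x) ^ (n + 1) := by rw [add_mul]; gcongr

theorem isLittleO_exp (hf : HasPolynomialGrowth f) {b : ℝ} (hb : 0 < b) :
    f =o[atTop] fun x => Real.exp (b * x) := by
  obtain ⟨C, n, hC⟩ := hf.exists_bound
  have hle : f =O[atTop] fun x => (1 + x) ^ n := by
    refine Asymptotics.IsBigO.of_bound C ?_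
    filter_upwards [eventually_ge_atTop 0] with x hx
    rw [Real.norm_of_nonneg (by positivity : 0 ≤ (1 + x) ^ n)]
    exact hC x hx
  have hpow : (fun x : ℝ => (1 + x) ^ n) =O[atTop] fun x => x ^ n := by
    refine (Asymptotics.IsBigO.add ?_ (Asymptotics.isBigO_refl _ _)).pow n
    exact (Asymptotics.isLittleO_const_id_atTop (1 : ℝ)).isBigO
  exact (hle.trans hpow).trans_isLittleO (isLittleO_pow_exp_pos_mul_atTop n hb)

theorem isBigO_cexp_mul (hf : HasPolynomialGrowth f) {p : ℂ} (hp : 0 < p.re) :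
    (fun x : ℝ => Complex.exp (-p * x) * f x) =O[atTop] fun x => Real.exp (-(p.re / 2) * x) := by
  have hexp : (fun x : ℝ => Complex.exp (-p * x)) =O[atTop] fun x => Real.exp (-p.re * x) :=
    .of_bound 1 (.of_forall fun x => by simp [Complex.norm_exp])
  refine (hexp.mul (Complex.isBigO_ofReal_left.mpr
    (hf.isLittleO_exp (half_pos hp)).isBigO)).trans_eventuallyEq (.of_forall fun x => ?_)
  simp only [← Real.exp_add]
  ring_nf

theorem continuous_cexp_mul (hf : HasPolynomialGrowth f) (p : ℂ) :
    Continuous fun x : ℝ => Complex.exp (-p * x) * f x := by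
  have := hf.continuous
  fun_prop

theorem integrableOn_cexp_mul (hf : HasPolynomialGrowth f) {p : ℂ} (hp : 0 < p.re) :
    IntegrableOn (fun x : ℝ => Complex.exp (-p * x) * f x) (Ioi 0) := by
  rw [IntegrableOn, ← integrable_norm_iff (hf.continuous_cexp_mul p).aestronglyMeasurable]
  exact integrable_of_isBigO_exp_neg (half_pos hp)
    (hf.continuous_cexp_mul p).norm.continuousOn (hf.isBigO_cexp_mul hp).norm_left

theorem tendsto_cexp_mul (hf : HasPolynomialGrowth f) {p : ℂ} (hp : 0 < p.re) :
    Tendsto (fun x : ℝ => Complex.exp (-p * x) * f x) atTop (nhds 0) := by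
  refine (hf.isBigO_cexp_mul hp).trans_tendsto ?_
  simp only [neg_mul]
  exact tendsto_exp_neg_atTop_nhds_zero.comp (tendsto_id.const_mul_atTop (half_pos hp))

end HasPolynomialGrowth

end PolynomialGrowth

section Laplace

open PowerSeries

/-- The Laplace transform of `f` at `p`. -/
noncomputable def laplace (p : ℂ) (f : ℝ → ℝ) : ℂ :=
  ∫ x in Ioi (0 : ℝ), Complex.exp (-p * x) * f x

/-- The Taylor series at `p` of the Laplace transform of `f`, as a formal power series. -/
noncomputable def laplaceSeries (p : ℂ) (f : ℝ → ℝ) : ℂ⟦X⟧ :=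
  PowerSeries.mk fun k => (-1) ^ k / k.factorial * laplace p fun x => x ^ k * f x

variable {p : ℂ} {f f' g : ℝ → ℝ}

theorem laplace_add (hp : 0 < p.re) (hf : HasPolynomialGrowth f) (hg : HasPolynomialGrowth g) :
    laplace p (fun x => f x + g x) = laplace p f + laplace p g := by
  simp only [laplace, Complex.ofReal_add, mul_add]
  exact integral_add (hf.integrableOn_cexp_mul hp) (hg.integrableOn_cexp_mul hp)

theorem laplace_const_mul (p : ℂ) (c : ℝ) (f : ℝ → ℝ) :
    laplace p (fun x => c * f x) = c * laplace p f := by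
  simp only [laplace, Complex.ofReal_mul, mul_left_comm _ (c : ℂ)]
  exact integral_const_mul _ _

theorem laplace_hasDerivAt (hp : 0 < p.re) (hderiv : ∀ x, HasDerivAt f (f' x) x)
    (hf' : HasPolynomialGrowth f') : p * laplace p f = f 0 + laplace p f' := by
  have hf := HasPolynomialGrowth.of_hasDerivAt hderiv hf'
  have hexp (x : ℝ) :
      HasDerivAt (fun x : ℝ => Complex.exp (-p * x)) (Complex.exp (-p * x) * (-p)) x := by
    simpa using ((Complex.ofRealCLM.hasDerivAt (x := x)).const_mul (-p)).cexp
  have hprod (x : ℝ) : HasDerivAt (fun x : ℝ => Complex.exp (-p * x) * f x)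
      (-p * (Complex.exp (-p * x) * f x) + Complex.exp (-p * x) * f' x) x :=
    ((hexp x).mul (hderiv x).ofReal_comp).congr_deriv (by ring)
  have hint := (hf.integrableOn_cexp_mul hp).const_mul (-p)
  have h := integral_Ioi_of_hasDerivAt_of_tendsto (hf.continuous_cexp_mul p).continuousWithinAt
    (fun x _ => hprod x) (hint.add (hf'.integrableOn_cexp_mul hp)) (hf.tendsto_cexp_mul hp)
  rw [integral_add hint (hf'.integrableOn_cexp_mul hp), integral_const_mul] at h
  simp only [laplace]
  simp only [Complex.ofReal_zero, mul_zero, Complex.exp_zero, one_mul] at h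
  linear_combination -h

theorem laplaceSeries_const_mul (p : ℂ) (c : ℝ) (f : ℝ → ℝ) :
    laplaceSeries p (fun x => c * f x) = C (c : ℂ) * laplaceSeries p f := by
  ext k
  simp only [laplaceSeries, coeff_mk, coeff_C_mul, mul_left_comm _ c, laplace_const_mul]
  ring

theorem laplaceSeries_id_mul (p : ℂ) (f : ℝ → ℝ) :
    laplaceSeries p (fun x => x * f x) = -d⁄dX ℂ (laplaceSeries p f) := by
  ext k
  simp only [laplaceSeries, coeff_mk, map_neg, coeff_derivative, ← mul_assoc, ← pow_succ,
    Nat.factorial_succ]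
  push_cast
  have : (k : ℂ) + 1 ≠ 0 := Nat.cast_add_one_ne_zero k
  field_simp
  ring

theorem laplaceSeries_hasDerivAt (hp : 0 < p.re) (hderiv : ∀ x, HasDerivAt f (f' x) x)
    (hf' : HasPolynomialGrowth f') :
    (C p + X) * laplaceSeries p f = C (f 0 : ℂ) + laplaceSeries p f' := by
  have hf := HasPolynomialGrowth.of_hasDerivAt hderiv hf'
  rw [add_mul, mul_comm X]
  ext k
  match k with
  | 0 =>
    simp [laplaceSeries, laplace_hasDerivAt hp hderiv hf']
  | k + 1 =>
    have hpow : p * laplace p (fun x => x ^ (k + 1) * f x) =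
        ((k + 1 : ℝ) : ℂ) * laplace p (fun x => x ^ k * f x) +
          laplace p fun x => x ^ (k + 1) * f' x := by
      have hlow : HasPolynomialGrowth fun x => (k + 1 : ℝ) * (x ^ k * f x) :=
        (HasPolynomialGrowth.const _).mul ((HasPolynomialGrowth.pow k).mul hf)
      have hhigh : HasPolynomialGrowth fun x => x ^ (k + 1) * f' x :=
        (HasPolynomialGrowth.pow _).mul hf'
      rw [← laplace_const_mul, ← laplace_add hp hlow hhigh,
        laplace_hasDerivAt hp (fun x => ?_) (hlow.add hhigh)]
      · simp
      · exact ((hasDerivAt_pow (k + 1) x).mul (hderiv x)).congr_deriv (by push_cast; ring)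
    simp only [laplaceSeries, map_add, coeff_C_mul, coeff_succ_mul_X, coeff_mk, coeff_C,
      Nat.factorial_succ, Nat.succ_ne_zero, if_false]
    push_cast at hpow ⊢
    have : (k : ℂ) + 1 ≠ 0 := Nat.cast_add_one_ne_zero k
    have : (k.factorial : ℂ) ≠ 0 := Nat.cast_ne_zero.mpr k.factorial_ne_zero
    field_simp
    linear_combination (-1) ^ (k + 1) * hpow

end Laplace

section HalfIntegerBessel

open PowerSeries

/-- The function `x^{2N+1} J̃_{N+1/2}(ax)`. -/
noncomputable def halfIntBessel (a : ℝ) (N : ℕ) (x : ℝ) : ℝ :=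
  x ^ (2 * N + 1) * besselJt (N + 1 / 2) (a * x)

theorem halfIntBessel_zero_right (a : ℝ) (N : ℕ) : halfIntBessel a N 0 = 0 := by
  simp [halfIntBessel]

theorem hasDerivAt_halfIntBessel_zero (a x : ℝ) :
    HasDerivAt (halfIntBessel a 0) (2 / √π * Real.cos (a * x)) x := by
  have h := hasDerivAt_pow_mul_besselJt (n := 0) (α := (0 : ℕ) + 1 / 2) (by norm_num) a x
  refine h.congr_deriv ?_
  rw [show ((0 : ℕ) : ℝ) + 1 / 2 - 1 = -(1 / 2) by norm_num, besselJt_neg_half]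
  ring

theorem hasDerivAt_two_div_sqrt_pi_mul_cos (a x : ℝ) :
    HasDerivAt (fun x => 2 / √π * Real.cos (a * x)) (-a ^ 2 * halfIntBessel a 0 x) x := by
  refine (((hasDerivAt_besselJt (-(1 / 2)) (a * x)).comp x
    ((hasDerivAt_id x).const_mul a)).const_mul 2).congr_of_eventuallyEq (.of_forall fun y => ?_)
    |>.congr_deriv ?_
  · simp only [Function.comp_apply, besselJt_neg_half]
    ring
  · rw [show -(1 / 2) + 1 = ((0 : ℕ) : ℝ) + 1 / 2 by norm_num, halfIntBessel]
    ring

theorem hasDerivAt_halfIntBessel_succ (a : ℝ) (N : ℕ) (x : ℝ) :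
    HasDerivAt (halfIntBessel a (N + 1)) (2 * (x * halfIntBessel a N x)) x := by
  have h := hasDerivAt_pow_mul_besselJt (n := 2 * (N + 1)) (α := (N + 1 : ℕ) + 1 / 2)
    (by push_cast; ring) a x
  refine h.congr_deriv ?_
  rw [show ((N + 1 : ℕ) : ℝ) + 1 / 2 - 1 = N + 1 / 2 by push_cast; ring, halfIntBessel]
  ring

theorem hasPolynomialGrowth_halfIntBessel (a : ℝ) (N : ℕ) :
    HasPolynomialGrowth (halfIntBessel a N) := by
  induction N with
  | zero =>
    refine .of_hasDerivAt (hasDerivAt_halfIntBessel_zero a) (.mul (.const _) ?_)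
    exact .of_abs_le (by fun_prop) 1 fun x => Real.abs_cos_le_one _
  | succ N ih =>
    exact .of_hasDerivAt (hasDerivAt_halfIntBessel_succ a N) (.mul (.const 2) (.mul .id ih))

theorem laplaceSeries_halfIntBessel_zero {p : ℂ} (hp : 0 < p.re) (a : ℝ) :
    ((C p + X) ^ 2 + C ((a : ℂ) ^ 2)) * laplaceSeries p (halfIntBessel a 0) =
      C (2 / √π : ℂ) := by
  have hgrowth := hasPolynomialGrowth_halfIntBessel a 0
  have hcos : HasPolynomialGrowth fun x => 2 / √π * Real.cos (a * x) :=
    .of_hasDerivAt (hasDerivAt_two_div_sqrt_pi_mul_cos a) (.mul (.const _) hgrowth)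
  have h₁ := laplaceSeries_hasDerivAt hp (hasDerivAt_halfIntBessel_zero a) hcos
  have h₂ := laplaceSeries_hasDerivAt hp (hasDerivAt_two_div_sqrt_pi_mul_cos a)
    (.mul (.const _) hgrowth)
  rw [laplaceSeries_const_mul _ (-a ^ 2)] at h₂
  rw [halfIntBessel_zero_right] at h₁
  simp only [Complex.ofReal_zero, map_zero, zero_add] at h₁
  simp only [mul_zero, Real.cos_zero, mul_one] at h₂
  push_cast at h₂
  simp only [map_neg, map_pow] at h₂ ⊢
  linear_combination (C p + X) * h₁ + h₂

theorem laplaceSeries_halfIntBessel {p : ℂ} (hp : 0 < p.re) (a : ℝ) (N : ℕ) :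
    ((C p + X) ^ 2 + C ((a : ℂ) ^ 2)) ^ (N + 1) * laplaceSeries p (halfIntBessel a N) =
      C (4 ^ N * N.factorial * (2 / √π) : ℂ) := by
  induction N with
  | zero => simpa using laplaceSeries_halfIntBessel_zero hp a
  | succ N ih =>
    set Q : ℂ⟦X⟧ := (C p + X) ^ 2 + C ((a : ℂ) ^ 2) with hQ
    set F := laplaceSeries p (halfIntBessel a N) with hF
    have hne : C p + X ≠ 0 := fun h => by
      simpa using congrArg (coeff 1) h
    have hstep : (C p + X) * laplaceSeries p (halfIntBessel a (N + 1)) = -2 * d⁄dX ℂ F := by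
      rw [laplaceSeries_hasDerivAt hp (hasDerivAt_halfIntBessel_succ a N)
        (.mul (.const 2) (.mul .id (hasPolynomialGrowth_halfIntBessel a N))),
        laplaceSeries_const_mul, laplaceSeries_id_mul, halfIntBessel_zero_right, ← hF]
      simp [map_ofNat]
    have hderiv : Q ^ (N + 1) * d⁄dX ℂ F = -2 * ((N : ℂ⟦X⟧) + 1) * (C p + X) * (Q ^ N * F) := by
      have h := congrArg (d⁄dX ℂ) ih
      simp only [Derivation.leibniz, Derivation.leibniz_pow, derivative_C, smul_eq_mul, hQ, map_add,
        derivative_X, nsmul_eq_mul] at h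
      simp only [← hQ, Nat.cast_add] at h
      norm_num at h
      linear_combination h
    refine mul_left_cancel₀ hne ?_
    calc _ = Q ^ (N + 2) * ((C p + X) * laplaceSeries p (halfIntBessel a (N + 1))) := by ring
      _ = 4 * ((N : ℂ⟦X⟧) + 1) * (C p + X) * (Q ^ (N + 1) * F) := by
        rw [hstep]
        linear_combination -2 * Q * hderiv
      _ = _ := by
        rw [ih, Nat.factorial_succ]
        simp only [map_mul, map_pow, map_ofNat, map_natCast, Nat.cast_mul, Nat.cast_add,
          Nat.cast_one, map_add, map_one]
        ring

end HalfIntegerBessel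

section LaguerreTransform

open PowerSeries

theorem laplace_finset_sum {ι : Type*} (s : Finset ι) {p : ℂ} (hp : 0 < p.re) {f : ι → ℝ → ℝ}
    (hf : ∀ i ∈ s, HasPolynomialGrowth (f i)) :
    laplace p (fun x => ∑ i ∈ s, f i x) = ∑ i ∈ s, laplace p (f i) := by
  simp only [laplace, Complex.ofReal_sum, Finset.mul_sum]
  exact integral_finsetSum _ fun i hi => (hf i hi).integrableOn_cexp_mul hp

theorem coeff_mk_one_pow_succ (d n : ℕ) :
    coeff n ((PowerSeries.mk 1 : ℂ⟦X⟧) ^ (d + 1)) = (d + n).choose d := by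
  rw [mk_one_pow_eq_mk_choose_add, coeff_mk]

theorem laplace_laguerreL_mul {p : ℂ} (hp : 0 < p.re) {f : ℝ → ℝ} (hf : HasPolynomialGrowth f)
    (j μ : ℕ) :
    laplace p (fun x => laguerreL j μ (2 * x) * f x) =
      coeff j (PowerSeries.mk 1 ^ (μ + 1) *
        (laplaceSeries p f).subst (X * (C 2 * PowerSeries.mk 1))) := by
  have hterm (k : ℕ) (x : ℝ) : (-1) ^ k * ((j + μ).choose (j - k)) * (2 * x) ^ k / k.factorial
      * f x = (-1) ^ k / k.factorial * (2 ^ k * (j + μ).choose (j - k)) * (x ^ k * f x) := by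
    ring
  simp only [laguerreL, Finset.sum_mul, hterm]
  rw [laplace_finset_sum _ hp fun k _ => (HasPolynomialGrowth.const _).mul
    ((HasPolynomialGrowth.pow k).mul hf), coeff_mul_subst]
  refine Finset.sum_congr rfl fun k hk => ?_
  obtain ⟨m, rfl⟩ := Nat.exists_eq_add_of_le (Finset.mem_range_succ_iff.mp hk)
  have hpow : (PowerSeries.mk 1 : ℂ⟦X⟧) ^ (μ + 1) * (C 2 * PowerSeries.mk 1) ^ k =
      C (2 ^ k) * PowerSeries.mk 1 ^ (μ + k + 1) := by
    rw [map_pow]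
    ring
  rw [laplace_const_mul, laplaceSeries, coeff_mk, hpow, coeff_C_mul, coeff_mk_one_pow_succ,
    Nat.add_sub_cancel_left, show k + m + μ = μ + k + m by ring, Nat.choose_symm_add]
  push_cast
  ring

theorem mk_one_pow_mul_subst_of_sq_add_pow_mul {p a κ : ℂ} {N : ℕ} {P : ℂ⟦X⟧}
    (hP : ((C p + X) ^ 2 + C a) ^ (N + 1) * P = C κ) :
    ((C p * (1 - X) + C 2 * X) ^ 2 + C a * (1 - X) ^ 2) ^ (N + 1) *
      (PowerSeries.mk 1 ^ (2 * N + 2) * P.subst (X * (C 2 * PowerSeries.mk 1))) = C κ := by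
  set G : ℂ⟦X⟧ := PowerSeries.mk 1
  have hG : G * (1 - X) = 1 := mk_one_mul_one_sub_eq_one ℂ
  have hsubst : HasSubst (X * (C 2 * G)) := HasSubst.of_constantCoeff_zero' (by simp)
  have h : ((C p + X * (C 2 * G)) ^ 2 + C a) ^ (N + 1) * P.subst (X * (C 2 * G)) = C κ := by
    have hC (c : ℂ) : substAlgHom hsubst (C c) = C c := (substAlgHom hsubst).commutes c
    simpa only [map_mul, map_pow, map_add, hC, substAlgHom_X, coe_substAlgHom] using
      congrArg (substAlgHom hsubst) hP
  have hquad : ((C p * (1 - X) + C 2 * X) ^ 2 + C a * (1 - X) ^ 2) * G ^ 2 =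
      (C p + X * (C 2 * G)) ^ 2 + C a := by
    linear_combination (C p * (C p * (G * (1 - X)) + C p + 2 * C 2 * X * G)
      + C a * (G * (1 - X) + 1)) * hG
  rw [← h, ← hquad, mul_pow _ (G ^ 2), ← pow_mul]
  ring

end LaguerreTransform

section GegenbauerIntegral

open PowerSeries

theorem mk_pow_mul_gegenbauerCt_mul (N : ℕ) (x : ℝ) (w : ℂ) :
    (PowerSeries.mk fun n => w ^ n * gegenbauerCt n (N + 1) x) *
      (1 - C (2 * x * w) * X + C (w ^ 2) * X ^ 2) ^ (N + 1) = C (N.factorial : ℂ) := by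
  have rescale_C (c : ℂ) : rescale w (C c) = C c := by
    ext n
    rcases n with _ | n <;> simp [coeff_rescale, coeff_C]
  have h := congrArg ((rescale w).comp (map Complex.ofRealHom))
    (gegenbauerSeries_natCast_add_one_mul N x)
  simp only [map_mul, map_pow, map_add, map_sub, map_one, RingHom.comp_apply, map_X, map_C,
    rescale_X, rescale_C] at h
  simp only [gegenbauerSeries, Complex.ofRealHom_eq_coe, Complex.ofReal_natCast] at h
  rw [← h]
  congr 2
  · ext n
    simp
  · simp only [map_mul, map_pow, Complex.ofReal_ofNat]
    ring

theorem sq_add_mul_one_sub_sq_eq {c s d t : ℂ} (hcs : c ^ 2 + s ^ 2 = 1) (hdt : d ^ 2 + t ^ 2 = 1)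
    (hne : c + d ≠ 0) :
    (C (1 + t / (c + d) * Complex.I) * (1 - X) + C 2 * X) ^ 2 +
        C ((s / (c + d)) ^ 2) * (1 - X) ^ 2 =
      C (2 / (c + d) * (d + t * Complex.I)) * (1 - C (2 * c * -(d - t * Complex.I)) * X +
        C ((-(d - t * Complex.I)) ^ 2) * X ^ 2) := by
  have expand (p a : ℂ) : (C p * (1 - X) + C 2 * X) ^ 2 + C a * (1 - X) ^ 2 =
      C (p ^ 2 + a) + C (2 * p * (2 - p) - 2 * a) * X + C ((2 - p) ^ 2 + a) * X ^ 2 := by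
    simp only [map_add, map_sub, map_mul, map_pow, map_ofNat]
    ring
  have hI := Complex.I_sq
  have hconst : (1 + t / (c + d) * Complex.I) ^ 2 + (s / (c + d)) ^ 2 =
      2 / (c + d) * (d + t * Complex.I) := by
    field_simp
    linear_combination hcs - hdt + t ^ 2 * hI
  have hlin : 2 * (1 + t / (c + d) * Complex.I) * (2 - (1 + t / (c + d) * Complex.I)) -
      2 * (s / (c + d)) ^ 2 =
        2 / (c + d) * (d + t * Complex.I) * (2 * c * (d - t * Complex.I)) := by
    field_simp
    linear_combination hdt - hcs - t ^ 2 * hI - 2 * c * (c + d) * (hdt - t ^ 2 * hI)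
  have hsq : (2 - (1 + t / (c + d) * Complex.I)) ^ 2 + (s / (c + d)) ^ 2 =
      2 / (c + d) * (d + t * Complex.I) * (d - t * Complex.I) ^ 2 := by
    field_simp
    linear_combination hcs - hdt + t ^ 2 * hI - 2 * (c + d) * (d - t * Complex.I) *
      (hdt - t ^ 2 * hI)
  rw [expand, hconst, hlin, hsq, neg_sq, mul_neg]
  simp only [map_mul, map_neg]
  ring

theorem re_one_add_ofReal_mul_I (b : ℝ) : (1 + b * Complex.I : ℂ).re = 1 := by
  simp

theorem sq_add_mul_one_sub_sq_eq_cexp {ϑ φ : ℝ} (hS : Real.cos ϑ + Real.cos φ ≠ 0) :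
    (C (1 + (Real.sin φ / (Real.cos ϑ + Real.cos φ) : ℝ) * Complex.I) * (1 - X) + C 2 * X) ^ 2 +
        C (((Real.sin ϑ / (Real.cos ϑ + Real.cos φ) : ℝ) : ℂ) ^ 2) * (1 - X) ^ 2 =
      C (2 / (Real.cos ϑ + Real.cos φ : ℝ) * Complex.exp (φ * Complex.I)) *
        (1 - C (2 * Real.cos ϑ * -Complex.exp (-(φ * Complex.I))) * X +
          C ((-Complex.exp (-(φ * Complex.I))) ^ 2) * X ^ 2) := by
  have h := sq_add_mul_one_sub_sq_eq (c := Real.cos ϑ) (s := Real.sin ϑ) (d := Real.cos φ)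
    (t := Real.sin φ) (by exact_mod_cast Real.cos_sq_add_sin_sq ϑ)
    (by exact_mod_cast Real.cos_sq_add_sin_sq φ) (by exact_mod_cast hS)
  have hexp : Complex.exp (-(φ * Complex.I)) = Real.cos φ - Real.sin φ * Complex.I := by
    rw [← neg_mul, Complex.exp_mul_I, Complex.cos_neg, Complex.sin_neg, Complex.ofReal_cos,
      Complex.ofReal_sin, neg_mul, sub_eq_add_neg]
  rw [hexp, Complex.exp_mul_I, ← Complex.ofReal_cos, ← Complex.ofReal_sin]
  push_cast at h ⊢
  exact h

theorem pow_mul_laplace_laguerreL_mul_halfIntBessel {ϑ φ : ℝ}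
    (hS : Real.cos ϑ + Real.cos φ ≠ 0) (N j : ℕ) :
    (2 / (Real.cos ϑ + Real.cos φ : ℝ) * Complex.exp (φ * Complex.I)) ^ (N + 1) *
      laplace (1 + (Real.sin φ / (Real.cos ϑ + Real.cos φ) : ℝ) * Complex.I)
        (fun x => laguerreL j (2 * N + 1) (2 * x) *
          halfIntBessel (Real.sin ϑ / (Real.cos ϑ + Real.cos φ)) N x) =
      4 ^ N * (2 / √π) *
        ((-Complex.exp (-(φ * Complex.I))) ^ j * gegenbauerCt j (N + 1) (Real.cos ϑ)) := by
  have hquad := sq_add_mul_one_sub_sq_eq_cexp hS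
  set a := Real.sin ϑ / (Real.cos ϑ + Real.cos φ)
  set p : ℂ := 1 + (Real.sin φ / (Real.cos ϑ + Real.cos φ) : ℝ) * Complex.I
  set A : ℂ := 2 / (Real.cos ϑ + Real.cos φ : ℝ) * Complex.exp (φ * Complex.I)
  set w : ℂ := -Complex.exp (-(φ * Complex.I))
  set Q : ℂ⟦X⟧ := 1 - C (2 * Real.cos ϑ * w) * X + C (w ^ 2) * X ^ 2 with hQ
  have hre : 0 < p.re := (re_one_add_ofReal_mul_I _).symm ▸ one_pos
  have hF := mk_one_pow_mul_subst_of_sq_add_pow_mul (laplaceSeries_halfIntBessel hre a N)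
  rw [hquad, mul_pow, ← map_pow, mul_right_comm (4 ^ N : ℂ), map_mul] at hF
  have hG := mk_pow_mul_gegenbauerCt_mul N (Real.cos ϑ) w
  rw [← hQ] at hG
  have hQ0 : Q ≠ 0 := fun h => by simpa [hQ] using congrArg constantCoeff h
  have hseries : C (A ^ (N + 1)) * (PowerSeries.mk 1 ^ (2 * N + 2) *
      (laplaceSeries p (halfIntBessel a N)).subst (X * (C 2 * PowerSeries.mk 1))) =
        C (4 ^ N * (2 / √π) : ℂ) *
          PowerSeries.mk fun n => w ^ n * gegenbauerCt n (N + 1) (Real.cos ϑ) := by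
    refine mul_left_cancel₀ (pow_ne_zero (N + 1) hQ0) ?_
    linear_combination hF - C (4 ^ N * (2 / √π) : ℂ) * hG
  have hcoeff := congrArg (coeff j) hseries
  rwa [coeff_C_mul, coeff_C_mul, ← laplace_laguerreL_mul hre
    (hasPolynomialGrowth_halfIntBessel a N) j (2 * N + 1), coeff_mk] at hcoeff

theorem laplace_laguerreL_mul_halfIntBessel {ϑ φ : ℝ} (hS : Real.cos ϑ + Real.cos φ ≠ 0)
    (N j : ℕ) :
    laplace (1 + (Real.sin φ / (Real.cos ϑ + Real.cos φ) : ℝ) * Complex.I)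
        (fun x => laguerreL j (2 * N + 1) (2 * x) *
          halfIntBessel (Real.sin ϑ / (Real.cos ϑ + Real.cos φ)) N x) =
      (4 ^ N * (2 / √π) * ((Real.cos ϑ + Real.cos φ) / 2) ^ (N + 1) *
          ((-1) ^ j * gegenbauerCt j (N + 1) (Real.cos ϑ)) : ℝ) *
        Complex.exp (-((j + N + 1) * φ : ℝ) * Complex.I) := by
  have hS' : ((Real.cos ϑ + Real.cos φ : ℝ) : ℂ) ≠ 0 := Complex.ofReal_ne_zero.mpr hS
  have he := Complex.exp_ne_zero (φ * Complex.I)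
  refine mul_left_cancel₀ (pow_ne_zero (N + 1) (mul_ne_zero (div_ne_zero two_ne_zero hS') he)) ?_
  rw [pow_mul_laplace_laguerreL_mul_halfIntBessel hS]
  have hexp : Complex.exp (-((j + N + 1) * φ : ℝ) * Complex.I) =
      (Complex.exp (φ * Complex.I))⁻¹ ^ (N + 1) * (Complex.exp (φ * Complex.I))⁻¹ ^ j := by
    rw [← Complex.exp_neg, ← pow_add, ← Complex.exp_nat_mul]
    push_cast
    ring_nf
  rw [hexp, Complex.exp_neg]
  generalize Complex.exp (φ * Complex.I) = e at he ⊢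
  push_cast at hS' ⊢
  have hcancel : (2 / (Complex.cos ϑ + Complex.cos φ) * e) ^ (N + 1) *
      (((Complex.cos ϑ + Complex.cos φ) / 2) ^ (N + 1) * e⁻¹ ^ (N + 1)) = 1 := by
    rw [← mul_pow, ← mul_pow]
    field_simp
    simp
  rw [neg_pow e⁻¹]
  linear_combination -(4 ^ N * (2 / (√π : ℂ)) * ((-1) ^ j *
    (gegenbauerCt j (N + 1) (Real.cos ϑ) : ℂ) * e⁻¹ ^ j)) * hcancel

theorem re_laplace_one_add_mul_I {f : ℝ → ℝ} (hf : HasPolynomialGrowth f) (b : ℝ) :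
    (laplace (1 + b * Complex.I) f).re =
      ∫ x in Ioi (0 : ℝ), Real.exp (-x) * Real.cos (b * x) * f x := by
  have hre : 0 < (1 + b * Complex.I : ℂ).re := (re_one_add_ofReal_mul_I b).symm ▸ one_pos
  rw [laplace, ← Complex.reCLM_apply,
    ← Complex.reCLM.integral_comp_comm (hf.integrableOn_cexp_mul hre)]
  refine integral_congr_ae (.of_forall fun x => ?_)
  simp [Complex.exp_re]

end GegenbauerIntegral

section Evaluation

/-- The polynomial `L_j^μ(2X)`. -/
noncomputable def laguerrePoly (j μ : ℕ) : Polynomial ℝ :=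
  ∑ k ∈ Finset.range (j + 1),
    Polynomial.monomial k ((-2) ^ k * (j + μ).choose (j - k) / k.factorial)

theorem eval_laguerrePoly (j μ : ℕ) (x : ℝ) :
    (laguerrePoly j μ).eval x = laguerreL j μ (2 * x) := by
  rw [laguerrePoly, Polynomial.eval_finsetSum, laguerreL]
  refine Finset.sum_congr rfl fun k _ => ?_
  rw [Polynomial.eval_monomial, mul_pow, neg_pow]
  ring

/-- The Laguerre function `e^{-x} L_j^μ(2x)`. -/
noncomputable def laguerreFun (j μ : ℕ) (x : ℝ) : ℝ :=
  Real.exp (-x) * (laguerrePoly j μ).eval x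

theorem integral_laguerreFun_mul_besselJt {ϑ φ : ℝ} (hS : Real.cos ϑ + Real.cos φ ≠ 0)
    (N j : ℕ) :
    ∫ x in Ioi (0 : ℝ), laguerreFun j (2 * N + 1) x *
        besselJt (N + 1 / 2) (Real.sin ϑ / (Real.cos ϑ + Real.cos φ) * x) *
        besselJt (-(1 / 2)) (Real.sin φ / (Real.cos ϑ + Real.cos φ) * x) * x ^ (2 * N + 1) =
      4 ^ N * ((j + N + 1) / π) * ((Real.cos ϑ + Real.cos φ) / 2) ^ (N + 1) *
        ((-1) ^ j * gegenbauerCt j (N + 1) (Real.cos ϑ)) *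
        gegenbauerCt (j + N + 1) 0 (Real.cos φ) := by
  set a := Real.sin ϑ / (Real.cos ϑ + Real.cos φ)
  set b := Real.sin φ / (Real.cos ϑ + Real.cos φ)
  have hgrowth : HasPolynomialGrowth fun x =>
      laguerreL j (2 * N + 1) (2 * x) * halfIntBessel a N x := by
    simp only [← eval_laguerrePoly]
    exact (HasPolynomialGrowth.polynomial_eval _).mul (hasPolynomialGrowth_halfIntBessel a N)
  have h := re_laplace_one_add_mul_I hgrowth b
  rw [laplace_laguerreL_mul_halfIntBessel hS, Complex.re_ofReal_mul, ← Complex.ofReal_neg,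
    Complex.exp_ofReal_mul_I_re, Real.cos_neg] at h
  have hcos : Real.cos ((j + N + 1) * φ) =
      (j + N + 1) / 2 * gegenbauerCt (j + N + 1) 0 (Real.cos φ) := by
    have := succ_mul_gegenbauerCt_succ_zero_cos (j + N) φ
    push_cast at this
    linear_combination -(this / 2)
  calc ∫ x in Ioi (0 : ℝ), laguerreFun j (2 * N + 1) x * besselJt (N + 1 / 2) (a * x) *
        besselJt (-(1 / 2)) (b * x) * x ^ (2 * N + 1)
      = ∫ x in Ioi (0 : ℝ), (√π)⁻¹ * (Real.exp (-x) * Real.cos (b * x) *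
          (laguerreL j (2 * N + 1) (2 * x) * halfIntBessel a N x)) := by
        congr 1 with x
        rw [laguerreFun, eval_laguerrePoly, besselJt_neg_half, halfIntBessel]
        ring
    _ = _ := by
        rw [integral_const_mul, ← h, hcos]
        have : √π ≠ 0 := (sqrt_pos.mpr pi_pos).ne'
        field_simp
        rw [Real.sq_sqrt pi_pos.le]
        ring

theorem Gamma_neg_half : Real.Gamma (-(1 / 2)) = -2 * √π := by
  have h := Real.Gamma_add_one (s := -(1 / 2)) (by norm_num)
  rw [show (-(1 / 2) + 1 : ℝ) = 1 / 2 by norm_num, Real.Gamma_one_half_eq] at h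
  linarith

theorem two_pow_mul_Gamma_mul_Gamma (n : ℕ) :
    2 ^ n * (Real.Gamma (((n : ℝ) + 2) / 2) * Real.Gamma (((n : ℝ) + 1) / 2)) =
      n.factorial * √π := by
  have h := Real.Gamma_mul_Gamma_add_half (((n : ℝ) + 1) / 2)
  rw [show ((n : ℝ) + 1) / 2 + 1 / 2 = (n + 2) / 2 by ring,
    show 2 * (((n : ℝ) + 1) / 2) = n + 1 by ring, Real.Gamma_nat_eq_factorial,
    show (1 : ℝ) - (n + 1) = -n by ring, Real.rpow_neg two_pos.le, Real.rpow_natCast] at h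
  rw [mul_comm (Real.Gamma _), h]
  field_simp

theorem gamma_constant_mul_choose (N j : ℕ) :
    (j.factorial * (2 : ℝ) ^ (2 * ((2 * N + 1 : ℕ) : ℝ) - 1) *
        Real.Gamma ((((2 * N + 1 : ℕ) : ℝ) + 2) / 2) *
        Real.Gamma ((((2 * N + 1 : ℕ) : ℝ) + 1) / 2) *
        Real.Gamma (j + (((2 * N + 1 : ℕ) : ℝ) + 3) / 2)) /
      (Real.Gamma (j + (((2 * N + 1 : ℕ) : ℝ) + 1) / 2) * π *
        Real.Gamma (j + ((2 * N + 1 : ℕ) : ℝ) + 1)) * (-2 / Real.Gamma (-(1 / 2))) *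
      (j + (2 * N + 1)).choose j = 4 ^ N * ((j + N + 1) / π) := by
  have hΓ₁ : Real.Gamma (j + (((2 * N + 1 : ℕ) : ℝ) + 1) / 2) = (j + N).factorial := by
    rw [← Real.Gamma_nat_eq_factorial]
    push_cast
    ring_nf
  have hΓ₃ : Real.Gamma (j + (((2 * N + 1 : ℕ) : ℝ) + 3) / 2) =
      (j + N + 1) * (j + N).factorial := by
    rw [← hΓ₁, show (j + N + 1 : ℝ) = j + (((2 * N + 1 : ℕ) : ℝ) + 1) / 2 by push_cast; ring,
      ← Real.Gamma_add_one (by positivity)]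
    push_cast
    ring_nf
  have hΓ : Real.Gamma (j + ((2 * N + 1 : ℕ) : ℝ) + 1) = (j + (2 * N + 1)).factorial := by
    rw [← Real.Gamma_nat_eq_factorial, Nat.cast_add j]
  have htwo : (2 : ℝ) ^ (2 * ((2 * N + 1 : ℕ) : ℝ) - 1) = 4 ^ N * 2 ^ (2 * N + 1) := by
    rw [show 2 * ((2 * N + 1 : ℕ) : ℝ) - 1 = (4 * N + 1 : ℕ) by push_cast; ring,
      Real.rpow_natCast, show (4 : ℝ) = 2 ^ 2 by norm_num, ← pow_mul, ← pow_add]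
    ring_nf
  have hchoose : ((j + (2 * N + 1)).choose j : ℝ) * j.factorial * (2 * N + 1).factorial =
      (j + (2 * N + 1)).factorial := by
    rw [Nat.choose_symm_add]
    exact_mod_cast Nat.add_choose_mul_factorial_mul_factorial j (2 * N + 1)
  have hdup := two_pow_mul_Gamma_mul_Gamma (2 * N + 1)
  rw [Gamma_neg_half, hΓ₁, hΓ₃, hΓ, htwo, ← hchoose]
  have hsqrt : √π ≠ 0 := (sqrt_pos.mpr pi_pos).ne'
  have : ((j + (2 * N + 1)).choose j : ℝ) ≠ 0 :=
    Nat.cast_ne_zero.mpr (Nat.choose_pos (Nat.le_add_right j _)).ne'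
  field_simp
  linear_combination hdup

end Evaluation

section LaguerreOperator

/-- The operator `f ↦ x f'' + (μ + 1) f' - x f`. Its square differs from `D_{μ,-1}` by the constant
`(μ + 1)²`. -/
noncomputable def laguerreOp (μ : ℝ) (f : ℝ → ℝ) (x : ℝ) : ℝ :=
  x * deriv (deriv f) x + (μ + 1) * deriv f x - x * f x

theorem laguerreOp_eq {f f₁ f₂ : ℝ → ℝ} (hf : ∀ x > 0, HasDerivAt f (f₁ x) x)
    (hf₁ : ∀ x > 0, HasDerivAt f₁ (f₂ x) x) (μ : ℝ) {x : ℝ} (hx : 0 < x) :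
    laguerreOp μ f x = x * f₂ x + (μ + 1) * f₁ x - x * f x := by
  have heq : deriv f =ᶠ[nhds x] f₁ := by
    filter_upwards [Ioi_mem_nhds hx] with y hy using (hf y hy).deriv
  rw [laguerreOp, heq.deriv_eq, (hf₁ x hx).deriv, (hf x hx).deriv]

theorem besselQ_eq {f f₁ f₂ : ℝ → ℝ} (hf : ∀ x > 0, HasDerivAt f (f₁ x) x)
    (hf₁ : ∀ x > 0, HasDerivAt f₁ (f₂ x) x) (ν c : ℝ) {x : ℝ} (hx : 0 < x) :
    besselQ ν c f x =
      x ^ 2 * f₂ x + (2 * c + ν + 1) * (x * f₁ x) + c * (c + ν) * f x - x ^ 2 * f x := by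
  have heq : (fun y => eulerOp f y + (c + ν) * f y) =ᶠ[nhds x]
      fun y => y * f₁ y + (c + ν) * f y := by
    filter_upwards [Ioi_mem_nhds hx] with y hy
    rw [eulerOp, (hf y hy).deriv]
  have hderiv : HasDerivAt (fun y => y * f₁ y + (c + ν) * f y)
      (1 * f₁ x + x * f₂ x + (c + ν) * f₁ x) x :=
    ((hasDerivAt_id x).mul (hf₁ x hx)).add ((hf x hx).const_mul _)
  rw [besselQ, eulerOp, heq.deriv_eq, hderiv.deriv, eulerOp, (hf x hx).deriv]
  ring

theorem hasDerivAt_deriv_of_contDiffOn_Ioi {f : ℝ → ℝ} {n : WithTop ℕ∞}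
    (hf : ContDiffOn ℝ n f (Ioi 0)) (hn : n ≠ 0) {x : ℝ} (hx : 0 < x) :
    HasDerivAt f (deriv f x) x :=
  ((hf.differentiableOn hn).differentiableAt (Ioi_mem_nhds hx)).hasDerivAt

theorem hasDerivAt_deriv_deriv_of_contDiffOn_Ioi {f : ℝ → ℝ} (hf : ContDiffOn ℝ 2 f (Ioi 0))
    {x : ℝ} (hx : 0 < x) : HasDerivAt (deriv f) (deriv (deriv f) x) x :=
  hasDerivAt_deriv_of_contDiffOn_Ioi (hf.deriv_of_isOpen isOpen_Ioi one_add_one_eq_two.le)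
    one_ne_zero hx

theorem contDiffOn_laguerreOp {f : ℝ → ℝ} {m n : WithTop ℕ∞} (hf : ContDiffOn ℝ n f (Ioi 0))
    (hmn : m + 1 + 1 ≤ n) (μ : ℝ) : ContDiffOn ℝ m (laguerreOp μ f) (Ioi 0) := by
  have h₁ : ContDiffOn ℝ (m + 1) (deriv f) (Ioi 0) := hf.deriv_of_isOpen isOpen_Ioi hmn
  have h₂ : ContDiffOn ℝ m (deriv (deriv f)) (Ioi 0) := h₁.deriv_of_isOpen isOpen_Ioi le_rfl
  exact ((contDiffOn_id.mul h₂).add (contDiffOn_const.mul (h₁.of_le le_self_add))).sub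
    (contDiffOn_id.mul (hf.of_le ((le_self_add.trans le_self_add).trans hmn)))

theorem laguerreOp_add_const_mul {f g : ℝ → ℝ} (hf : ContDiffOn ℝ 2 f (Ioi 0))
    (hg : ContDiffOn ℝ 2 g (Ioi 0)) (μ c : ℝ) {x : ℝ} (hx : 0 < x) :
    laguerreOp μ (fun y => f y + c * g y) x = laguerreOp μ f x + c * laguerreOp μ g x := by
  have h₁ (y : ℝ) (hy : 0 < y) :
      HasDerivAt (fun y => f y + c * g y) (deriv f y + c * deriv g y) y :=
    (hasDerivAt_deriv_of_contDiffOn_Ioi hf two_ne_zero hy).add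
      ((hasDerivAt_deriv_of_contDiffOn_Ioi hg two_ne_zero hy).const_mul c)
  have h₂ (y : ℝ) (hy : 0 < y) : HasDerivAt (fun y => deriv f y + c * deriv g y)
      (deriv (deriv f) y + c * deriv (deriv g) y) y :=
    (hasDerivAt_deriv_deriv_of_contDiffOn_Ioi hf hy).add
      ((hasDerivAt_deriv_deriv_of_contDiffOn_Ioi hg hy).const_mul c)
  rw [laguerreOp_eq h₁ h₂ μ hx, laguerreOp, laguerreOp]
  ring

theorem laguerreOp_const_mul (μ c : ℝ) (f : ℝ → ℝ) (x : ℝ) :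
    laguerreOp μ (fun y => c * f y) x = c * laguerreOp μ f x := by
  simp only [laguerreOp, deriv_const_mul_field']
  ring

theorem laguerreOp_laguerreOp_eq {u u₁ u₂ u₃ u₄ : ℝ → ℝ} (h₁ : ∀ x > 0, HasDerivAt u (u₁ x) x)
    (h₂ : ∀ x > 0, HasDerivAt u₁ (u₂ x) x) (h₃ : ∀ x > 0, HasDerivAt u₂ (u₃ x) x)
    (h₄ : ∀ x > 0, HasDerivAt u₃ (u₄ x) x) (μ : ℝ) {x : ℝ} (hx : 0 < x) :
    laguerreOp μ (laguerreOp μ u) x = x ^ 2 * (u₄ x - 2 * u₂ x + u x) +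
      2 * (μ + 2) * x * (u₃ x - u₁ x) + (μ + 1) * (μ + 2) * u₂ x - (μ + 1) * u x := by
  have hL₁ (y : ℝ) (hy : 0 < y) :
      HasDerivAt (laguerreOp μ u) (y * u₃ y + (μ + 2) * u₂ y - y * u₁ y - u y) y := by
    have heq : laguerreOp μ u =ᶠ[nhds y] fun z => z * u₂ z + (μ + 1) * u₁ z - z * u z := by
      filter_upwards [Ioi_mem_nhds hy] with z hz using laguerreOp_eq h₁ h₂ μ hz
    refine HasDerivAt.congr_of_eventuallyEq ?_ heq
    refine ((((hasDerivAt_id y).mul (h₃ y hy)).add ((h₂ y hy).const_mul (μ + 1))).sub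
      ((hasDerivAt_id y).mul (h₁ y hy))).congr_deriv ?_
    simp only [id_eq]
    ring
  have hL₂ (y : ℝ) (hy : 0 < y) :
      HasDerivAt (fun z => z * u₃ z + (μ + 2) * u₂ z - z * u₁ z - u z)
        (y * u₄ y + (μ + 3) * u₃ y - y * u₂ y - 2 * u₁ y) y := by
    refine (((((hasDerivAt_id y).mul (h₄ y hy)).add ((h₃ y hy).const_mul (μ + 2))).sub
      ((hasDerivAt_id y).mul (h₂ y hy))).sub (h₁ y hy)).congr_deriv ?_
    simp only [id_eq]
    ring
  rw [laguerreOp_eq hL₁ hL₂ μ hx, laguerreOp_eq h₁ h₂ μ hx]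
  ring

theorem Dop_neg_one_eq {u u₁ u₂ u₃ u₄ : ℝ → ℝ} (h₁ : ∀ x > 0, HasDerivAt u (u₁ x) x)
    (h₂ : ∀ x > 0, HasDerivAt u₁ (u₂ x) x) (h₃ : ∀ x > 0, HasDerivAt u₂ (u₃ x) x)
    (h₄ : ∀ x > 0, HasDerivAt u₃ (u₄ x) x) (μ : ℝ) {x : ℝ} (hx : 0 < x) :
    Dop μ (-1) u x = x ^ 2 * (u₄ x - 2 * u₂ x + u x) +
      2 * (μ + 2) * x * (u₃ x - u₁ x) + (μ + 1) * (μ + 2) * (u₂ x - u x) := by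
  have hinner (y : ℝ) (hy : 0 < y) : besselQ (-1) 0 u y = y ^ 2 * (u₂ y - u y) := by
    rw [besselQ_eq h₁ h₂ _ _ hy]
    ring
  have hQ₁ (y : ℝ) (hy : 0 < y) : HasDerivAt (besselQ (-1) 0 u)
      (2 * y * (u₂ y - u y) + y ^ 2 * (u₃ y - u₁ y)) y := by
    have heq : besselQ (-1) 0 u =ᶠ[nhds y] fun z => z ^ 2 * (u₂ z - u z) := by
      filter_upwards [Ioi_mem_nhds hy] with z hz using hinner z hz
    refine HasDerivAt.congr_of_eventuallyEq ?_ heq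
    exact ((hasDerivAt_pow 2 y).mul ((h₃ y hy).sub (h₁ y hy))).congr_deriv (by simp)
  have hQ₂ (y : ℝ) (hy : 0 < y) : HasDerivAt
      (fun y => 2 * y * (u₂ y - u y) + y ^ 2 * (u₃ y - u₁ y))
      (2 * (u₂ y - u y) + 4 * y * (u₃ y - u₁ y) + y ^ 2 * (u₄ y - u₂ y)) y :=
    ((((hasDerivAt_id y).const_mul 2).mul ((h₃ y hy).sub (h₁ y hy))).add
      ((hasDerivAt_pow 2 y).mul ((h₄ y hy).sub (h₂ y hy)))).congr_deriv (by simp; ring)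
  rw [Dop, besselQ_eq hQ₁ hQ₂ _ _ hx, hinner x hx]
  field_simp
  ring

theorem laguerreOp_laguerreOp_eq_Dop_add {u : ℝ → ℝ} (hu : ContDiffOn ℝ 4 u (Ioi 0)) (μ : ℝ)
    {x : ℝ} (hx : 0 < x) :
    laguerreOp μ (laguerreOp μ u) x = Dop μ (-1) u x + (μ + 1) ^ 2 * u x := by
  have hu₁ : ContDiffOn ℝ 3 (deriv u) (Ioi 0) := hu.deriv_of_isOpen isOpen_Ioi (by norm_num)
  have hu₂ : ContDiffOn ℝ 2 (deriv (deriv u)) (Ioi 0) :=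
    hu₁.deriv_of_isOpen isOpen_Ioi (by norm_num)
  have h₁ (y : ℝ) (hy : 0 < y) := hasDerivAt_deriv_of_contDiffOn_Ioi hu four_ne_zero hy
  have h₂ (y : ℝ) (hy : 0 < y) := hasDerivAt_deriv_of_contDiffOn_Ioi hu₁ three_ne_zero hy
  have h₃ (y : ℝ) (hy : 0 < y) := hasDerivAt_deriv_of_contDiffOn_Ioi hu₂ two_ne_zero hy
  have h₄ (y : ℝ) (hy : 0 < y) := hasDerivAt_deriv_deriv_of_contDiffOn_Ioi hu₂ hy
  rw [laguerreOp_laguerreOp_eq h₁ h₂ h₃ h₄ μ hx, Dop_neg_one_eq h₁ h₂ h₃ h₄ μ hx]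
  ring

end LaguerreOperator

section LaguerreFun

theorem coeff_laguerrePoly {j k : ℕ} (μ : ℕ) (hk : k ≤ j) :
    (laguerrePoly j μ).coeff k = (-2) ^ k * (j + μ).choose (j - k) / k.factorial := by
  simp only [laguerrePoly, Polynomial.finsetSum_coeff, Polynomial.coeff_monomial]
  rw [Finset.sum_ite_eq', if_pos (Finset.mem_range_succ_iff.mpr hk)]

theorem coeff_laguerrePoly_of_lt {j k : ℕ} (μ : ℕ) (hk : j < k) :
    (laguerrePoly j μ).coeff k = 0 := by
  simp only [laguerrePoly, Polynomial.finsetSum_coeff, Polynomial.coeff_monomial]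
  rw [Finset.sum_ite_eq', if_neg (by simpa using hk)]

theorem coeff_laguerrePoly_succ (j μ k : ℕ) :
    (k + 1) * (k + μ + 1) * (laguerrePoly j μ).coeff (k + 1) =
      -2 * (j - k) * (laguerrePoly j μ).coeff k := by
  obtain hk | rfl | hk := lt_trichotomy k j
  · obtain ⟨d, rfl⟩ := Nat.exists_eq_add_of_lt hk
    have hchoose := Nat.choose_succ_right_eq (k + d + 1 + μ) d
    rw [show k + d + 1 + μ - d = k + μ + 1 by lia] at hchoose
    have hchoose' : ((k + d + 1 + μ).choose (d + 1) : ℝ) * (d + 1) =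
        (k + d + 1 + μ).choose d * (k + μ + 1) := by exact_mod_cast hchoose
    rw [coeff_laguerrePoly μ hk.le, coeff_laguerrePoly μ hk, show k + d + 1 - k = d + 1 by lia,
      show k + d + 1 - (k + 1) = d by lia, Nat.factorial_succ, pow_succ]
    push_cast
    field_simp
    linear_combination hchoose'
  · rw [coeff_laguerrePoly_of_lt μ k.lt_succ_self]
    ring
  · rw [coeff_laguerrePoly_of_lt μ hk, coeff_laguerrePoly_of_lt μ (hk.trans k.lt_succ_self)]
    ring

theorem laguerrePoly_differential_equation (j μ : ℕ) :
    Polynomial.X * (laguerrePoly j μ).derivative.derivative +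
      (Polynomial.C (μ + 1 : ℝ) - 2 * Polynomial.X) * (laguerrePoly j μ).derivative +
      Polynomial.C (2 * j : ℝ) * laguerrePoly j μ = 0 := by
  ext k
  have hrec := coeff_laguerrePoly_succ j μ k
  have htwo : (2 : Polynomial ℝ) = Polynomial.C 2 := rfl
  cases k with
  | zero =>
    simp only [htwo, sub_mul, mul_assoc, Polynomial.coeff_add, Polynomial.coeff_sub,
      Polynomial.coeff_C_mul, Polynomial.coeff_X_mul_zero, Polynomial.coeff_derivative,
      Polynomial.coeff_zero]
    push_cast at hrec ⊢
    linear_combination hrec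
  | succ k =>
    simp only [htwo, sub_mul, mul_assoc, Polynomial.coeff_add, Polynomial.coeff_sub,
      Polynomial.coeff_C_mul, Polynomial.coeff_X_mul, Polynomial.coeff_derivative,
      Polynomial.coeff_zero]
    push_cast at hrec ⊢
    linear_combination hrec

theorem laguerrePoly_eval_zero (j μ : ℕ) : (laguerrePoly j μ).eval 0 = (j + μ).choose j := by
  simp [← Polynomial.coeff_zero_eq_eval_zero, coeff_laguerrePoly]

theorem laguerrePoly_ne_zero (j μ : ℕ) : laguerrePoly j μ ≠ 0 := fun h => by
  have := laguerrePoly_eval_zero j μ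
  rw [h, Polynomial.eval_zero] at this
  exact (Nat.choose_pos (Nat.le_add_right j μ)).ne (by exact_mod_cast this)

theorem laguerreFun_zero (j μ : ℕ) : laguerreFun j μ 0 = (j + μ).choose j := by
  simp [laguerreFun, laguerrePoly_eval_zero]

theorem hasDerivAt_exp_neg_mul_eval (P : Polynomial ℝ) (x : ℝ) :
    HasDerivAt (fun x => Real.exp (-x) * P.eval x)
      (Real.exp (-x) * (P.derivative - P).eval x) x := by
  refine ((hasDerivAt_neg x).exp.mul (P.hasDerivAt x)).congr_deriv ?_
  rw [Polynomial.eval_sub]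
  ring

theorem laguerreOp_laguerreFun (j μ : ℕ) {x : ℝ} (hx : 0 < x) :
    laguerreOp μ (laguerreFun j μ) x = -(2 * j + μ + 1) * laguerreFun j μ x := by
  have hode := congrArg (Polynomial.eval x) (laguerrePoly_differential_equation j μ)
  simp only [Polynomial.eval_add, Polynomial.eval_mul, Polynomial.eval_sub, Polynomial.eval_X,
    Polynomial.eval_C, Polynomial.eval_ofNat, Polynomial.eval_zero] at hode
  rw [laguerreOp_eq (f := laguerreFun j μ) (fun y _ => hasDerivAt_exp_neg_mul_eval _ y)
    (fun y _ => hasDerivAt_exp_neg_mul_eval _ y) μ hx, laguerreFun]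
  simp only [Polynomial.derivative_sub, Polynomial.eval_sub]
  linear_combination Real.exp (-x) * hode

theorem contDiff_laguerreFun (j μ : ℕ) (n : WithTop ℕ∞) : ContDiff ℝ n (laguerreFun j μ) :=
  contDiff_neg.exp.mul (by simpa using (laguerrePoly j μ).contDiff_aeval (𝕜 := ℝ) n)

theorem integrableOn_laguerreFun_sq_mul_pow (j μ m : ℕ) :
    IntegrableOn (fun x => laguerreFun j μ x ^ 2 * x ^ m) (Ioi 0) := by
  have hgrowth : HasPolynomialGrowth fun x => (laguerrePoly j μ ^ 2 * Polynomial.X ^ m).eval x :=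
    .polynomial_eval _
  refine (hgrowth.integrableOn_cexp_mul (p := 2) (by norm_num)).re.congr (.of_forall fun x => ?_)
  have hexp : Complex.exp (-2 * x) = (Real.exp (-x) ^ 2 : ℝ) := by
    rw [← Real.exp_nat_mul]
    push_cast
    ring_nf
  simp only [hexp, ← Complex.ofReal_mul, RCLike.re_to_complex, Complex.ofReal_re, laguerreFun,
    Polynomial.eval_mul, Polynomial.eval_pow, Polynomial.eval_X]
  ring

end LaguerreFun

section Wronskian

/-- The flux `x^{μ+1} f'`, whose derivative is `x^μ (x f'' + (μ + 1) f')`. -/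
noncomputable def laguerreFlux (μ : ℕ) (f : ℝ → ℝ) (x : ℝ) : ℝ :=
  x ^ (μ + 1) * deriv f x

/-- The Wronskian `x^{μ+1} (f' g - f g')` attached to `laguerreOp μ`. -/
noncomputable def laguerreWronskian (μ : ℕ) (f g : ℝ → ℝ) (x : ℝ) : ℝ :=
  laguerreFlux μ f x * g x - f x * laguerreFlux μ g x

variable {f g : ℝ → ℝ} {μ : ℕ} {x : ℝ}

theorem hasDerivAt_laguerreFlux (hf : ContDiffOn ℝ 2 f (Ioi 0)) (hx : 0 < x) :
    HasDerivAt (laguerreFlux μ f) (x ^ μ * (laguerreOp μ f x + x * f x)) x := by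
  refine ((hasDerivAt_pow (μ + 1) x).mul
    (hasDerivAt_deriv_deriv_of_contDiffOn_Ioi hf hx)).congr_deriv ?_
  rw [laguerreOp, Nat.add_sub_cancel]
  push_cast
  ring

theorem hasDerivAt_laguerreWronskian (hf : ContDiffOn ℝ 2 f (Ioi 0))
    (hg : ContDiffOn ℝ 2 g (Ioi 0)) (hx : 0 < x) :
    HasDerivAt (laguerreWronskian μ f g)
      (x ^ μ * (laguerreOp μ f x * g x - f x * laguerreOp μ g x)) x := by
  refine (((hasDerivAt_laguerreFlux hf hx).mul
    (hasDerivAt_deriv_of_contDiffOn_Ioi hg two_ne_zero hx)).sub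
    ((hasDerivAt_deriv_of_contDiffOn_Ioi hf two_ne_zero hx).mul
      (hasDerivAt_laguerreFlux hg hx))).congr_deriv ?_
  rw [laguerreFlux, laguerreFlux]
  ring

theorem hasDerivAt_div_eq_laguerreWronskian (hf : ContDiffOn ℝ 2 f (Ioi 0))
    (hg : ContDiffOn ℝ 2 g (Ioi 0)) (hx : 0 < x) (hgx : g x ≠ 0) :
    HasDerivAt (fun y => f y / g y)
      (laguerreWronskian μ f g x / (x ^ (μ + 1) * g x ^ 2)) x := by
  refine ((hasDerivAt_deriv_of_contDiffOn_Ioi hf two_ne_zero hx).div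
    (hasDerivAt_deriv_of_contDiffOn_Ioi hg two_ne_zero hx) hgx).congr_deriv ?_
  rw [laguerreWronskian, laguerreFlux, laguerreFlux]
  field_simp

theorem exists_laguerreWronskian_eq_const {c : ℝ} (hf : ContDiffOn ℝ 2 f (Ioi 0))
    (hg : ContDiffOn ℝ 2 g (Ioi 0)) (hLf : ∀ x > 0, laguerreOp μ f x = c * f x)
    (hLg : ∀ x > 0, laguerreOp μ g x = c * g x) :
    ∃ k, ∀ x > 0, laguerreWronskian μ f g x = k := by
  have hderiv (x : ℝ) (hx : x ∈ Ioi (0 : ℝ)) : HasDerivAt (laguerreWronskian μ f g) 0 x := by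
    refine (hasDerivAt_laguerreWronskian hf hg hx).congr_deriv ?_
    rw [hLf x hx, hLg x hx]
    ring
  exact isOpen_Ioi.exists_is_const_of_deriv_eq_zero isPreconnected_Ioi
    (fun x hx => (hderiv x hx).differentiableAt.differentiableWithinAt)
    fun x hx => (hderiv x hx).deriv

theorem lipschitzWith_mul_snd_mul_fst (p q : ℝ) :
    LipschitzWith (max ‖p‖₊ ‖q‖₊) fun y : ℝ × ℝ => (p * y.2, q * y.1) :=
  (((lipschitzWith_smul p).comp LipschitzWith.prod_snd).weaken (mul_one _).le).prodMk
    (((lipschitzWith_smul q).comp LipschitzWith.prod_fst).weaken (mul_one _).le)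

theorem eqOn_Ioi_of_laguerreOp_eq {c x₀ : ℝ} (hf : ContDiffOn ℝ 2 f (Ioi 0))
    (hg : ContDiffOn ℝ 2 g (Ioi 0)) (hLf : ∀ x > 0, laguerreOp μ f x = c * f x)
    (hLg : ∀ x > 0, laguerreOp μ g x = c * g x) (hx₀ : 0 < x₀) (hval : f x₀ = g x₀)
    (hflux : laguerreFlux μ f x₀ = laguerreFlux μ g x₀) : EqOn f g (Ioi 0) := by
  intro x hx
  obtain ⟨a, ha0, ha⟩ := exists_between (lt_min hx₀ hx)
  obtain ⟨b, hb⟩ := exists_gt (max x₀ x)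
  rw [lt_min_iff] at ha
  rw [max_lt_iff] at hb
  let v (t : ℝ) (y : ℝ × ℝ) : ℝ × ℝ := ((t ^ (μ + 1))⁻¹ * y.2, t ^ μ * (t + c) * y.1)
  have hcont : ContinuousOn (fun t : ℝ => max ‖(t ^ (μ + 1))⁻¹‖₊ ‖t ^ μ * (t + c)‖₊) (Icc a b) := by
    refine (ContinuousOn.inv₀ (by fun_prop) fun t ht => ?_).nnnorm.sup (by fun_prop)
    exact pow_ne_zero _ (ha0.trans_le ht.1).ne'
  obtain ⟨K, hK⟩ := (isCompact_Icc.image_of_continuousOn hcont).bddAbove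
  have hlip (t : ℝ) (ht : t ∈ Ioo a b) : LipschitzOnWith K (v t) univ := by
    have hle := hK (mem_image_of_mem _ (Ioo_subset_Icc_self ht))
    exact ((lipschitzWith_mul_snd_mul_fst _ _).weaken hle).lipschitzOnWith
  have hsol {h : ℝ → ℝ} (hh : ContDiffOn ℝ 2 h (Ioi 0))
      (hLh : ∀ x > 0, laguerreOp μ h x = c * h x) (t : ℝ) (ht : t ∈ Ioo a b) :
      HasDerivAt (fun t => (h t, laguerreFlux μ h t)) (v t (h t, laguerreFlux μ h t)) t ∧
        (h t, laguerreFlux μ h t) ∈ univ := by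
    have ht0 : 0 < t := ha0.trans ht.1
    refine ⟨HasDerivAt.prodMk ?_ ?_, mem_univ _⟩
    · refine (hasDerivAt_deriv_of_contDiffOn_Ioi hh two_ne_zero ht0).congr_deriv ?_
      rw [laguerreFlux]
      field_simp
    · refine (hasDerivAt_laguerreFlux hh ht0).congr_deriv ?_
      rw [hLh t ht0]
      ring
  have heq := ODE_solution_unique_of_mem_Ioo hlip ⟨ha.1, hb.1⟩ (hsol hf hLf) (hsol hg hLg)
    (Prod.ext hval hflux) ⟨ha.2, hb.2⟩
  exact congrArg Prod.fst heq

end Wronskian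

section Growth

theorem eventually_mul_le_of_mul_le_deriv {f f' g g' : ℝ → ℝ} {K M : ℝ} (hK : 0 < K) (hM : 0 < M)
    (hg : Tendsto g atTop atTop) (hdf : ∀ᶠ x in atTop, HasDerivAt f (f' x) x)
    (hdg : ∀ᶠ x in atTop, HasDerivAt g (g' x) x) (hg' : ∀ᶠ x in atTop, g' x ≤ M * g x)
    (hf' : ∀ᶠ x in atTop, K * g x ≤ f' x) : ∀ᶠ x in atTop, K / (2 * M) * g x ≤ f x := by
  obtain ⟨a, ha⟩ := eventually_atTop.mp (hdf.and (hdg.and (hg'.and hf')))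
  have hderiv (x : ℝ) (hx : a ≤ x) :
      HasDerivAt (fun x => f x - K / M * g x) (f' x - K / M * g' x) x :=
    (ha x hx).1.sub ((ha x hx).2.1.const_mul _)
  have hmono : MonotoneOn (fun x => f x - K / M * g x) (Ici a) := by
    refine monotoneOn_of_hasDerivWithinAt_nonneg (convex_Ici a)
      (HasDerivAt.continuousOn hderiv)
      (fun x hx => (hderiv x (interior_subset hx)).hasDerivWithinAt) fun x hx => ?_
    obtain ⟨-, -, hgx, hfx⟩ := ha x (interior_subset hx)
    have : K / M * g' x ≤ K / M * (M * g x) := by gcongr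
    rw [show K / M * (M * g x) = K * g x by field_simp] at this
    linarith
  filter_upwards [eventually_ge_atTop a,
    (hg.const_mul_atTop (by positivity : 0 < K / (2 * M))).eventually_ge_atTop
      (-(f a - K / M * g a))] with x hx hgx
  have : f a - K / M * g a ≤ f x - K / M * g x := hmono self_mem_Ici hx hx
  have hhalf : K / M * g x = K / (2 * M) * g x + K / (2 * M) * g x := by
    field_simp
    ring
  linarith

theorem log_sub_integral_abs_le_sub {V V' h : ℝ → ℝ} {a x d : ℝ} (ha : 0 < a) (hax : a ≤ x)
    (hV : ∀ t ∈ Icc a x, HasDerivAt V (V' t) t) (hh : IntegrableOn h (Ioi 0))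
    (hV' : ∀ t ∈ Icc a x, d * t⁻¹ - h t ≤ V' t) :
    d * Real.log (x / a) - ∫ t in Ioi (0 : ℝ), |h t| ≤ V x - V a := by
  have hsub : Ioc a x ⊆ Ioi 0 := fun t ht => ha.trans ht.1
  have hinv : IntervalIntegrable (fun t => d * t⁻¹) volume a x :=
    (intervalIntegral.intervalIntegrable_inv (fun t ht => by
      rw [uIcc_of_le hax] at ht
      exact (ha.trans_le ht.1).ne') continuousOn_id).const_mul d
  have hhx : IntervalIntegrable h volume a x :=
    (intervalIntegrable_iff_integrableOn_Ioc_of_le hax).mpr (hh.mono_set hsub)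
  have hftc : ∫ t in a..x, (d * t⁻¹ - h t) ≤ V x - V a :=
    intervalIntegral.integral_le_sub_of_hasDeriv_right_of_le hax (HasDerivAt.continuousOn hV)
      (fun t ht => (hV t (Ioo_subset_Icc_self ht)).hasDerivWithinAt)
      ((intervalIntegrable_iff_integrableOn_Icc_of_le hax).mp (hinv.sub hhx))
      fun t ht => hV' t (Ioo_subset_Icc_self ht)
  have habs : ∫ t in a..x, h t ≤ ∫ t in Ioi (0 : ℝ), |h t| := by
    rw [intervalIntegral.integral_of_le hax]
    exact (integral_mono (hh.mono_set hsub) (hh.mono_set hsub).abs fun t => le_abs_self _).trans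
      (setIntegral_mono_set hh.abs (.of_forall fun t => abs_nonneg _) hsub.eventuallyLE)
  rw [intervalIntegral.integral_sub hinv hhx, intervalIntegral.integral_const_mul,
    integral_inv_of_pos ha (ha.trans_le hax)] at hftc
  linarith

theorem tendsto_atTop_of_inv_sub_le_deriv {V V' h : ℝ → ℝ} {d : ℝ} (hd : 0 < d)
    (hV : ∀ᶠ x in atTop, HasDerivAt V (V' x) x) (hh : IntegrableOn h (Ioi 0))
    (hV' : ∀ᶠ x in atTop, d * x⁻¹ - h x ≤ V' x) : Tendsto V atTop atTop := by
  obtain ⟨a, ha⟩ := eventually_atTop.mp ((eventually_gt_atTop 0).and (hV.and hV'))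
  have ha0 : 0 < a := (ha a le_rfl).1
  have hlower : ∀ᶠ x in atTop,
      d * Real.log (x / a) + (V a - ∫ t in Ioi (0 : ℝ), |h t|) ≤ V x := by
    filter_upwards [eventually_ge_atTop a] with x hx
    linarith [log_sub_integral_abs_le_sub ha0 hx (fun t ht => (ha t ht.1).2.1) hh
      fun t ht => (ha t ht.1).2.2]
  exact tendsto_atTop_mono' atTop hlower (tendsto_atTop_add_const_right _ _
    ((Real.tendsto_log_atTop.comp (tendsto_id.atTop_div_const ha0)).const_mul_atTop hd))

theorem eventually_neg_derivative_le {R : Polynomial ℝ} (hR : ∀ᶠ x in atTop, 0 < R.eval x) :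
    ∀ᶠ x in atTop, -R.derivative.eval x ≤ R.eval x := by
  have hR0 : R ≠ 0 := by
    rintro rfl
    obtain ⟨x, hx⟩ := hR.exists
    simp at hx
  have hlim := Polynomial.div_tendsto_atTop_zero_of_degree_lt _ _
    (Polynomial.degree_derivative_lt hR0)
  filter_upwards [hR, hlim.eventually_const_le neg_one_lt_zero] with x hx hdiv
  rw [le_div_iff₀ hx] at hdiv
  linarith

end Growth

section SquareIntegrable

variable {j μ : ℕ} {u q : ℝ → ℝ} {c k K : ℝ}

theorem eventually_laguerreFun_ne_zero (j μ : ℕ) : ∀ᶠ x in atTop, laguerreFun j μ x ≠ 0 := by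
  filter_upwards [Polynomial.eventually_atTop_not_isRoot _ (laguerrePoly_ne_zero j μ)] with x hx
  exact mul_ne_zero (Real.exp_pos _).ne' hx

theorem tendsto_pow_mul_laguerreFun_sq (j μ m : ℕ) :
    Tendsto (fun x => x ^ m * laguerreFun j μ x ^ 2) atTop (nhds 0) := by
  have h := ((Polynomial.X ^ m * laguerrePoly j μ).tendsto_div_exp_atTop).mul
    (laguerrePoly j μ).tendsto_div_exp_atTop
  rw [mul_zero] at h
  refine h.congr fun x => ?_
  rw [laguerreFun, Real.exp_neg, Polynomial.eval_mul, Polynomial.eval_pow, Polynomial.eval_X]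
  ring

/-- The reciprocal of `x^{μ+1} e^{-2x} L_j^μ(2x)²`, which grows like an exponential. -/
noncomputable def laguerreWeightInv (j μ : ℕ) (x : ℝ) : ℝ :=
  (x ^ (μ + 1) * laguerreFun j μ x ^ 2)⁻¹

theorem eventually_pow_mul_laguerreFun_sq_pos (j μ m : ℕ) :
    ∀ᶠ x in atTop, 0 < x ^ m * laguerreFun j μ x ^ 2 := by
  filter_upwards [eventually_gt_atTop 0, eventually_laguerreFun_ne_zero j μ] with x hx hℓ
  positivity

theorem tendsto_laguerreWeightInv (j μ : ℕ) : Tendsto (laguerreWeightInv j μ) atTop atTop :=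
  (tendsto_nhdsWithin_iff.mpr ⟨tendsto_pow_mul_laguerreFun_sq j μ (μ + 1),
    eventually_pow_mul_laguerreFun_sq_pos j μ (μ + 1)⟩).inv_tendsto_nhdsGT_zero

theorem exists_hasDerivAt_laguerreWeightInv_le (j μ : ℕ) :
    ∃ g' : ℝ → ℝ, (∀ᶠ x in atTop, HasDerivAt (laguerreWeightInv j μ) (g' x) x) ∧
      ∀ᶠ x in atTop, g' x ≤ 3 * laguerreWeightInv j μ x := by
  set R := Polynomial.X ^ (μ + 1) * laguerrePoly j μ ^ 2 with hR
  have hweight (x : ℝ) : x ^ (μ + 1) * laguerreFun j μ x ^ 2 = Real.exp (-x) ^ 2 * R.eval x := by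
    simp only [laguerreFun, hR, Polynomial.eval_mul, Polynomial.eval_pow, Polynomial.eval_X]
    ring
  have hpos : ∀ᶠ x in atTop, 0 < R.eval x := by
    filter_upwards [eventually_pow_mul_laguerreFun_sq_pos j μ (μ + 1)] with x hx
    rw [hweight] at hx
    exact pos_of_mul_pos_right hx (by positivity)
  refine ⟨fun x => (2 * R.eval x - R.derivative.eval x) / (Real.exp (-x) ^ 2 * R.eval x ^ 2),
    ?_, ?_⟩
  · filter_upwards [hpos] with x hx
    have hderiv := (((hasDerivAt_neg x).exp.pow 2).mul (R.hasDerivAt x)).inv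
      (by simp [hx.ne'] : Real.exp (-x) ^ 2 * R.eval x ≠ 0)
    rw [show laguerreWeightInv j μ = fun x => (Real.exp (-x) ^ 2 * R.eval x)⁻¹ from
      funext fun x => by rw [laguerreWeightInv, hweight]]
    refine hderiv.congr_deriv ?_
    simp only [Nat.cast_ofNat, Pi.mul_apply, Pi.pow_apply, Nat.add_one_sub_one, pow_one]
    field_simp
    ring
  · filter_upwards [hpos, eventually_neg_derivative_le hpos] with x hx hle
    rw [laguerreWeightInv, hweight, div_le_iff₀ (by positivity)]
    field_simp
    linarith

theorem eventually_le_mul_of_le_laguerreWronskian {f : ℝ → ℝ} (hf : ContDiffOn ℝ 2 f (Ioi 0))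
    (hK : 0 < K)
    (hW : ∀ᶠ x in atTop, K ≤ k * laguerreWronskian μ f (laguerreFun j μ) x) :
    ∀ᶠ x in atTop, K / 6 * x⁻¹ ≤ k * (f x * laguerreFun j μ x * x ^ μ) := by
  obtain ⟨g', hg', hg'_le⟩ := exists_hasDerivAt_laguerreWeightInv_le j μ
  have hg := tendsto_laguerreWeightInv j μ
  have hderiv : ∀ᶠ x in atTop, HasDerivAt (fun x => k * (f x / laguerreFun j μ x))
      (k * laguerreWronskian μ f (laguerreFun j μ) x * laguerreWeightInv j μ x) x := by
    filter_upwards [eventually_gt_atTop 0, eventually_laguerreFun_ne_zero j μ] with x hx hℓ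
    refine ((hasDerivAt_div_eq_laguerreWronskian (μ := μ) hf
      (contDiff_laguerreFun j μ 2).contDiffOn hx hℓ).const_mul k).congr_deriv ?_
    rw [laguerreWeightInv]
    ring
  have hle : ∀ᶠ x in atTop, K * laguerreWeightInv j μ x ≤
      k * laguerreWronskian μ f (laguerreFun j μ) x * laguerreWeightInv j μ x := by
    filter_upwards [hW, hg.eventually_ge_atTop 0] with x hx hpos
    gcongr
  have hquot := eventually_mul_le_of_mul_le_deriv hK three_pos hg hderiv hg' hg'_le hle
  filter_upwards [hquot, eventually_gt_atTop 0, eventually_laguerreFun_ne_zero j μ] with x hx hx0 hℓ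
  calc K / 6 * x⁻¹ = K / (2 * 3) * laguerreWeightInv j μ x * (x ^ μ * laguerreFun j μ x ^ 2) := by
        rw [laguerreWeightInv, pow_succ]
        field_simp
        norm_num
    _ ≤ k * (f x / laguerreFun j μ x) * (x ^ μ * laguerreFun j μ x ^ 2) := by gcongr
    _ = k * (f x * laguerreFun j μ x * x ^ μ) := by field_simp

theorem integrableOn_mul_laguerreFun_mul_pow (hu : ContinuousOn u (Ioi 0))
    (hL2 : IntegrableOn (fun x => u x ^ 2 * x ^ μ) (Ioi 0)) (j : ℕ) :
    IntegrableOn (fun x => u x * laguerreFun j μ x * x ^ μ) (Ioi 0) := by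
  refine (hL2.add (integrableOn_laguerreFun_sq_mul_pow j μ μ)).mono' ?_ ?_
  · have := (contDiff_laguerreFun j μ 0).continuous
    exact ((hu.mul this.continuousOn).mul (by fun_prop)).aestronglyMeasurable measurableSet_Ioi
  · filter_upwards [ae_restrict_mem measurableSet_Ioi] with x hx
    have hx0 : 0 ≤ x ^ μ := pow_nonneg (le_of_lt hx) μ
    rw [norm_mul, Real.norm_of_nonneg hx0, Pi.add_apply, ← add_mul]
    gcongr
    rw [Real.norm_eq_abs, abs_le]
    constructor <;> nlinarith [sq_nonneg (u x + laguerreFun j μ x),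
      sq_nonneg (u x - laguerreFun j μ x), sq_nonneg (u x), sq_nonneg (laguerreFun j μ x)]

theorem laguerreWronskian_eq_zero (hu : ContDiffOn ℝ 2 u (Ioi 0)) (hq : ContDiffOn ℝ 2 q (Ioi 0))
    (hL2 : IntegrableOn (fun x => u x ^ 2 * x ^ μ) (Ioi 0))
    (hLu : ∀ x > 0, laguerreOp μ u x = q x + c * u x)
    (hW : ∀ x > 0, laguerreWronskian μ q (laguerreFun j μ) x = k) : k = 0 := by
  by_contra hk
  have hint := integrableOn_mul_laguerreFun_mul_pow hu.continuousOn hL2 j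
  have hqℓ : ∀ᶠ x in atTop, k ^ 2 / 6 * x⁻¹ ≤ k * (q x * laguerreFun j μ x * x ^ μ) := by
    refine eventually_le_mul_of_le_laguerreWronskian hq (by positivity) ?_
    filter_upwards [eventually_gt_atTop 0] with x hx
    rw [hW x hx, sq]
  have hVderiv (x : ℝ) (hx : 0 < x) :
      HasDerivAt (fun x => k * laguerreWronskian μ u (laguerreFun j μ) x)
        (k * (q x * laguerreFun j μ x * x ^ μ) +
          k * (c + (2 * j + μ + 1)) * (u x * laguerreFun j μ x * x ^ μ)) x := by
    refine ((hasDerivAt_laguerreWronskian hu (contDiff_laguerreFun j μ 2).contDiffOn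
      hx).const_mul k).congr_deriv ?_
    rw [hLu x hx, laguerreOp_laguerreFun j μ hx]
    ring
  have hV : Tendsto (fun x => k * laguerreWronskian μ u (laguerreFun j μ) x) atTop atTop := by
    refine tendsto_atTop_of_inv_sub_le_deriv (by positivity : 0 < k ^ 2 / 6)
      ((eventually_gt_atTop 0).mono hVderiv) (hint.const_mul (-(k * (c + (2 * j + μ + 1))))) ?_
    filter_upwards [hqℓ] with x hx
    linarith
  obtain ⟨a, ha⟩ := eventually_atTop.mp ((eventually_gt_atTop 0).and
    (eventually_le_mul_of_le_laguerreWronskian hu one_pos (hV.eventually_ge_atTop 1)))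
  refine not_integrableOn_Ioi_inv (a := a) ?_
  have hle : IntegrableOn (fun x : ℝ => 1 / 6 * x⁻¹) (Ioi a) := by
    refine ((hint.mono_set (Ioi_subset_Ioi (ha a le_rfl).1.le)).const_mul k).mono'
      (by fun_prop) ?_
    filter_upwards [ae_restrict_mem measurableSet_Ioi] with x hx
    obtain ⟨hx0, hbound⟩ := ha x (le_of_lt hx)
    rwa [Real.norm_of_nonneg (by positivity)]
  exact (hle.const_mul 6).congr (.of_forall fun x => by ring)

end SquareIntegrable

section Energy

variable {p : ℝ → ℝ} {μ : ℕ} {c x : ℝ}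

/-- Half of the flux of `p²`; it is monotone when `laguerreOp μ p = c p` with `0 ≤ c`. -/
noncomputable def laguerreEnergy (μ : ℕ) (p : ℝ → ℝ) (x : ℝ) : ℝ :=
  p x * laguerreFlux μ p x

theorem hasDerivAt_sq_eq_laguerreEnergy (hp : ContDiffOn ℝ 2 p (Ioi 0)) (hx : 0 < x) :
    HasDerivAt (fun y => p y ^ 2) (2 * laguerreEnergy μ p x / x ^ (μ + 1)) x := by
  refine ((hasDerivAt_deriv_of_contDiffOn_Ioi hp two_ne_zero hx).pow 2).congr_deriv ?_
  rw [laguerreEnergy, laguerreFlux]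
  push_cast
  field_simp

theorem hasDerivAt_laguerreEnergy (hp : ContDiffOn ℝ 2 p (Ioi 0))
    (hLp : ∀ x > 0, laguerreOp μ p x = c * p x) (hx : 0 < x) :
    HasDerivAt (laguerreEnergy μ p)
      (x ^ (μ + 1) * deriv p x ^ 2 + x ^ μ * (c + x) * p x ^ 2) x := by
  refine ((hasDerivAt_deriv_of_contDiffOn_Ioi hp two_ne_zero hx).mul
    (hasDerivAt_laguerreFlux hp hx)).congr_deriv ?_
  rw [hLp x hx, laguerreFlux]
  ring

theorem monotoneOn_laguerreEnergy (hp : ContDiffOn ℝ 2 p (Ioi 0))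
    (hLp : ∀ x > 0, laguerreOp μ p x = c * p x) (hc : 0 ≤ c) :
    MonotoneOn (laguerreEnergy μ p) (Ioi 0) := by
  refine monotoneOn_of_hasDerivWithinAt_nonneg (convex_Ioi 0)
    (HasDerivAt.continuousOn fun x hx => hasDerivAt_laguerreEnergy hp hLp hx)
    (fun x hx => (hasDerivAt_laguerreEnergy hp hLp (interior_subset hx)).hasDerivWithinAt)
    fun x hx => ?_
  have hx0 : 0 < x := interior_subset hx
  positivity

theorem laguerreEnergy_nonpos (hp : ContDiffOn ℝ 2 p (Ioi 0))
    (hmono : MonotoneOn (laguerreEnergy μ p) (Ioi 0))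
    (hint : IntegrableOn (fun x => p x ^ 2 * x ^ μ) (Ioi 0)) (hx : 0 < x) :
    laguerreEnergy μ p x ≤ 0 := by
  by_contra! hpos
  have hsub : Ici x ⊆ Ioi 0 := Ici_subset_Ioi.mpr hx
  have hsq : MonotoneOn (fun y => p y ^ 2) (Ici x) := by
    refine monotoneOn_of_hasDerivWithinAt_nonneg (convex_Ici x)
      (HasDerivAt.continuousOn fun y hy => hasDerivAt_sq_eq_laguerreEnergy (μ := μ) hp (hsub hy))
      (fun y hy => (hasDerivAt_sq_eq_laguerreEnergy (μ := μ) hp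
        (hsub (interior_subset hy))).hasDerivWithinAt) fun y hy => ?_
    have hy0 : 0 < y := hsub (interior_subset hy)
    have : 0 < laguerreEnergy μ p y := hpos.trans_le (hmono hx hy0 (interior_subset hy))
    positivity
  have hpx : 0 < p x ^ 2 * x ^ μ := by
    have : p x ≠ 0 := left_ne_zero_of_mul hpos.ne'
    positivity
  have hconst : IntegrableOn (fun _ : ℝ => p x ^ 2 * x ^ μ) (Ioi x) := by
    refine (hint.mono_set (Ioi_subset_Ioi hx.le)).mono' (by fun_prop) ?_
    filter_upwards [ae_restrict_mem measurableSet_Ioi] with y hy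
    rw [Real.norm_of_nonneg hpx.le]
    have hy' : x ≤ y := le_of_lt hy
    have := hsq self_mem_Ici hy' hy'
    gcongr
  rw [integrableOn_const_iff] at hconst
  exact hconst.elim (fun h => hpx.ne' (by simpa using h)) (by simp)

theorem antitoneOn_sq_sub_mul_log (hp : ContDiffOn ℝ 2 p (Ioi 0))
    (hmono : MonotoneOn (laguerreEnergy μ p) (Ioi 0)) (hx : 0 < x)
    (hneg : laguerreEnergy μ p x ≤ 0) :
    AntitoneOn (fun y => p y ^ 2 - 2 * laguerreEnergy μ p x / x ^ μ * Real.log y) (Ioc 0 x) := by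
  have hderiv (y : ℝ) (hy : 0 < y) :=
    (hasDerivAt_sq_eq_laguerreEnergy (μ := μ) hp hy).sub
      ((Real.hasDerivAt_log hy.ne').const_mul (2 * laguerreEnergy μ p x / x ^ μ))
  refine antitoneOn_of_hasDerivWithinAt_nonpos (convex_Ioc 0 x)
    (HasDerivAt.continuousOn fun y hy => hderiv y hy.1)
    (fun y hy => (hderiv y (interior_Ioc.subset hy).1).hasDerivWithinAt) fun y hy => ?_
  obtain ⟨hy0, hyx⟩ : 0 < y ∧ y < x := interior_Ioc.subset hy
  have hEy : laguerreEnergy μ p y ≤ laguerreEnergy μ p x := hmono hy0 hx hyx.le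
  have hslope : 2 * laguerreEnergy μ p y / y ^ μ ≤ 2 * laguerreEnergy μ p x / x ^ μ := by
    rw [← neg_le_neg_iff, ← neg_div, ← neg_div]
    have : 0 ≤ -(2 * laguerreEnergy μ p y) := by linarith
    gcongr
  rw [sub_nonpos]
  calc 2 * laguerreEnergy μ p y / y ^ (μ + 1) = 2 * laguerreEnergy μ p y / y ^ μ * y⁻¹ := by
        rw [pow_succ, ← div_div, div_eq_mul_inv _ y]
    _ ≤ 2 * laguerreEnergy μ p x / x ^ μ * y⁻¹ := by gcongr

theorem laguerreEnergy_nonneg (hp : ContDiffOn ℝ 2 p (Ioi 0))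
    (hmono : MonotoneOn (laguerreEnergy μ p) (Ioi 0)) {C : ℝ}
    (hbound : ∀ᶠ x in nhdsWithin 0 (Ioi 0), p x ^ 2 ≤ C) (hx : 0 < x) :
    0 ≤ laguerreEnergy μ p x := by
  by_contra! hneg
  have hanti := antitoneOn_sq_sub_mul_log hp hmono hx hneg.le
  set d := 2 * laguerreEnergy μ p x / x ^ μ
  have hd : d < 0 := div_neg_of_neg_of_pos (by linarith) (by positivity)
  have hlog : Tendsto (fun y => p x ^ 2 - d * Real.log x + d * Real.log y)
      (nhdsWithin 0 (Ioi 0)) atTop :=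
    tendsto_atTop_add_const_left _ _ (Real.tendsto_log_nhdsGT_zero.const_mul_atBot_of_neg hd)
  obtain ⟨y, ⟨hy, hyC⟩, hyx⟩ := ((hbound.and (hlog.eventually_gt_atTop C)).and
    (Ioc_mem_nhdsGT hx)).exists
  have : p x ^ 2 - d * Real.log x ≤ p y ^ 2 - d * Real.log y :=
    hanti hyx (right_mem_Ioc.mpr hx) hyx.2
  linarith

theorem eq_zero_of_laguerreOp_eq_mul (hp : ContDiffOn ℝ 2 p (Ioi 0))
    (hLp : ∀ x > 0, laguerreOp μ p x = c * p x) (hc : 0 ≤ c)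
    (hint : IntegrableOn (fun x => p x ^ 2 * x ^ μ) (Ioi 0)) {C : ℝ}
    (hbound : ∀ᶠ x in nhdsWithin 0 (Ioi 0), p x ^ 2 ≤ C) (hx : 0 < x) : p x = 0 := by
  have hmono := monotoneOn_laguerreEnergy hp hLp hc
  have hzero : laguerreEnergy μ p =ᶠ[nhds x] fun _ => 0 := by
    filter_upwards [Ioi_mem_nhds hx] with y hy
    exact (laguerreEnergy_nonpos hp hmono hint hy).antisymm
      (laguerreEnergy_nonneg hp hmono hbound hy)
  have hderiv := (hasDerivAt_laguerreEnergy hp hLp hx).unique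
    ((hasDerivAt_const x (0 : ℝ)).congr_of_eventuallyEq hzero)
  by_contra hpx
  have : 0 < x ^ (μ + 1) * deriv p x ^ 2 + x ^ μ * (c + x) * p x ^ 2 := by positivity
  exact this.ne' hderiv

end Energy

section Classification

variable {j μ : ℕ} {u q : ℝ → ℝ} {B a c x : ℝ}

theorem eqOn_const_mul_laguerreFun (hq : ContDiffOn ℝ 2 q (Ioi 0))
    (hLq : ∀ x > 0, laguerreOp μ q x = -(2 * j + μ + 1) * q x)
    (hW : ∀ x > 0, laguerreWronskian μ q (laguerreFun j μ) x = 0) :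
    ∃ a : ℝ, EqOn q (fun x => a * laguerreFun j μ x) (Ioi 0) := by
  obtain ⟨x₀, hx₀, hℓ⟩ :=
    ((eventually_gt_atTop 0).and (eventually_laguerreFun_ne_zero j μ)).exists
  have hℓ2 : ContDiff ℝ 2 (laguerreFun j μ) := contDiff_laguerreFun j μ 2
  refine ⟨q x₀ / laguerreFun j μ x₀, eqOn_Ioi_of_laguerreOp_eq hq
    (contDiff_const.mul hℓ2).contDiffOn hLq (fun x hx => ?_) hx₀ (div_mul_cancel₀ _ hℓ).symm ?_⟩
  · rw [laguerreOp_const_mul, laguerreOp_laguerreFun j μ hx]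
    ring
  · have hflux : laguerreFlux μ q x₀ * laguerreFun j μ x₀ =
        q x₀ * laguerreFlux μ (laguerreFun j μ) x₀ := sub_eq_zero.mp (hW x₀ hx₀)
    have hmul : laguerreFlux μ (fun x => q x₀ / laguerreFun j μ x₀ * laguerreFun j μ x) x₀ =
        q x₀ / laguerreFun j μ x₀ * laguerreFlux μ (laguerreFun j μ) x₀ := by
      simp only [laguerreFlux, deriv_const_mul_field']
      ring
    rw [hmul, div_mul_eq_mul_div, ← hflux, mul_div_cancel_right₀ _ hℓ]

theorem laguerreOp_laguerreOp_eq_sq_mul (hu : ContDiffOn ℝ 4 u (Ioi 0))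
    (heig : ∀ x > 0, Dop μ (-1) u x = 4 * j * (j + (μ : ℝ) + 1) * u x) (hx : 0 < x) :
    laguerreOp μ (laguerreOp μ u) x = (2 * j + μ + 1) ^ 2 * u x := by
  rw [laguerreOp_laguerreOp_eq_Dop_add hu μ hx, heig x hx]
  ring

theorem laguerreOp_laguerreOp_sub_const_mul (hu : ContDiffOn ℝ 4 u (Ioi 0))
    (hLL : ∀ x > 0, laguerreOp μ (laguerreOp μ u) x = c ^ 2 * u x) (hx : 0 < x) :
    laguerreOp μ (fun y => laguerreOp μ u y + -c * u y) x =
      -c * (laguerreOp μ u x + -c * u x) := by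
  rw [laguerreOp_add_const_mul (contDiffOn_laguerreOp hu two_add_two_eq_four.le μ)
    (hu.of_le (by norm_num)) μ (-c) hx, hLL x hx]
  ring

theorem exists_laguerreOp_eq_const_mul_laguerreFun_add (hu : ContDiffOn ℝ 4 u (Ioi 0))
    (hL2 : IntegrableOn (fun x => u x ^ 2 * x ^ μ) (Ioi 0))
    (hLL : ∀ x > 0, laguerreOp μ (laguerreOp μ u) x = (2 * j + μ + 1) ^ 2 * u x) :
    ∃ a : ℝ, ∀ x > 0,
      laguerreOp μ u x = a * laguerreFun j μ x + (2 * j + μ + 1) * u x := by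
  set c : ℝ := 2 * j + μ + 1
  set q : ℝ → ℝ := fun x => laguerreOp μ u x + -c * u x with hq_def
  have hu2 : ContDiffOn ℝ 2 u (Ioi 0) := hu.of_le (by norm_num)
  have hq : ContDiffOn ℝ 2 q (Ioi 0) :=
    (contDiffOn_laguerreOp hu (by norm_num) μ).add (contDiffOn_const.mul hu2)
  have hLq (x : ℝ) (hx : 0 < x) : laguerreOp μ q x = -c * q x :=
    laguerreOp_laguerreOp_sub_const_mul hu hLL hx
  obtain ⟨k, hk⟩ := exists_laguerreWronskian_eq_const hq
    (contDiff_laguerreFun j μ 2).contDiffOn hLq fun x hx => laguerreOp_laguerreFun j μ hx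
  obtain rfl : k = 0 :=
    laguerreWronskian_eq_zero hu2 hq hL2 (c := c) (fun x _ => by simp only [hq_def]; ring) hk
  obtain ⟨a, ha⟩ := eqOn_const_mul_laguerreFun hq hLq hk
  refine ⟨a, fun x hx => ?_⟩
  linarith [ha hx]

theorem integrableOn_sq_const_mul_laguerreFun_add (hu : ContinuousOn u (Ioi 0))
    (hL2 : IntegrableOn (fun x => u x ^ 2 * x ^ μ) (Ioi 0)) (j : ℕ) (a c : ℝ) :
    IntegrableOn (fun x => (a * laguerreFun j μ x + c * u x) ^ 2 * x ^ μ) (Ioi 0) := by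
  refine ((((integrableOn_laguerreFun_sq_mul_pow j μ μ).const_mul (a ^ 2)).add
    ((integrableOn_mul_laguerreFun_mul_pow hu hL2 j).const_mul (2 * a * c))).add
    (hL2.const_mul (c ^ 2))).congr (.of_forall fun x => ?_)
  simp only [Pi.add_apply]
  ring

theorem eqOn_const_mul_laguerreFun_of_laguerreOp_eq (hu : ContDiffOn ℝ 2 u (Ioi 0))
    (hL2 : IntegrableOn (fun x => u x ^ 2 * x ^ μ) (Ioi 0))
    (hLu : ∀ x > 0, laguerreOp μ u x = a * laguerreFun j μ x + (2 * j + μ + 1) * u x)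
    (hB : Tendsto u (nhdsWithin 0 (Ioi 0)) (nhds B)) :
    EqOn u (fun x => -a / (2 * (2 * j + μ + 1)) * laguerreFun j μ x) (Ioi 0) := by
  set c : ℝ := 2 * j + μ + 1
  have hc0 : 0 < c := by positivity
  have haℓ : ContDiff ℝ 2 (fun x => a * laguerreFun j μ x) :=
    contDiff_const.mul (contDiff_laguerreFun j μ 2)
  have hp : ContDiffOn ℝ 2 (fun x => a * laguerreFun j μ x + 2 * c * u x) (Ioi 0) :=
    haℓ.contDiffOn.add (contDiffOn_const.mul hu)
  have hLp (x : ℝ) (hx : 0 < x) :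
      laguerreOp μ (fun x => a * laguerreFun j μ x + 2 * c * u x) x =
        c * (a * laguerreFun j μ x + 2 * c * u x) := by
    rw [laguerreOp_add_const_mul haℓ.contDiffOn hu _ _ hx, laguerreOp_const_mul,
      laguerreOp_laguerreFun j μ hx, hLu x hx]
    ring
  have hlim : Tendsto (fun x => (a * laguerreFun j μ x + 2 * c * u x) ^ 2)
      (nhdsWithin 0 (Ioi 0)) (nhds ((a * laguerreFun j μ 0 + 2 * c * B) ^ 2)) :=
    (haℓ.continuous.continuousWithinAt.tendsto.add (hB.const_mul (2 * c))).pow 2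
  intro x hx
  have hzero := eq_zero_of_laguerreOp_eq_mul hp hLp hc0.le
    (integrableOn_sq_const_mul_laguerreFun_add hu.continuousOn hL2 j a (2 * c))
    (hlim.eventually_le_const (lt_add_one _)) hx
  field_simp
  linarith

theorem eqOn_laguerreFun_of_tendsto (hu : ContDiffOn ℝ 4 u (Ioi 0))
    (hL2 : IntegrableOn (fun x => u x ^ 2 * x ^ μ) (Ioi 0))
    (heig : ∀ x > 0, Dop μ (-1) u x = 4 * j * (j + (μ : ℝ) + 1) * u x)
    (hB : Tendsto u (nhdsWithin 0 (Ioi 0)) (nhds B)) :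
    EqOn u (fun x => B / (j + μ).choose j * laguerreFun j μ x) (Ioi 0) := by
  obtain ⟨a, ha⟩ := exists_laguerreOp_eq_const_mul_laguerreFun_add hu hL2
    fun x hx => laguerreOp_laguerreOp_eq_sq_mul hu heig hx
  have hα := eqOn_const_mul_laguerreFun_of_laguerreOp_eq (hu.of_le (by norm_num)) hL2 ha hB
  set α := -a / (2 * (2 * j + μ + 1))
  have hlim : Tendsto u (nhdsWithin 0 (Ioi 0)) (nhds (α * laguerreFun j μ 0)) :=
    ((contDiff_laguerreFun j μ 0).continuous.const_mul α).continuousWithinAt.tendsto.congr' <| by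
      filter_upwards [self_mem_nhdsWithin] with x hx using (hα hx).symm
  have hchoose : ((j + μ).choose j : ℝ) ≠ 0 :=
    Nat.cast_ne_zero.mpr (Nat.choose_pos (Nat.le_add_right j μ)).ne'
  rwa [tendsto_nhds_unique hB hlim, laguerreFun_zero, mul_div_cancel_right₀ _ hchoose]

end Classification

theorem theoremB_nu_neg_one_general (μ : ℕ) (hμ : Odd μ) (j : ℕ) (u : ℝ → ℝ)
    (hu : ContDiffOn ℝ 4 u (Ioi 0))
    (hL2 : IntegrableOn (fun x => u x ^ 2 * x ^ (μ : ℝ)) (Ioi 0))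
    (heig : ∀ x > (0 : ℝ), Dop μ (-1) u x = 4 * j * (j + (μ : ℝ) + 1) * u x)
    (B : ℝ) (hB : Tendsto u (nhdsWithin 0 (Ioi 0)) (nhds B)) (ϑ φ : ℝ)
    (hS : cos ϑ + cos φ > 0) :
    ∫ x in Ioi (0 : ℝ),
        u x * besselJt ((μ : ℝ) / 2) (sin ϑ / (cos ϑ + cos φ) * x)
          * besselJt (-(1 / 2)) (sin φ / (cos ϑ + cos φ) * x) * x ^ (μ : ℝ)
      = ((-1) ^ j * (j.factorial * (2 : ℝ) ^ (2 * (μ : ℝ) - 1)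
              * Gamma (((μ : ℝ) + 2) / 2) * Gamma (((μ : ℝ) + 1) / 2)
              * Gamma (j + ((μ : ℝ) + 3) / 2))
            / (Gamma (j + ((μ : ℝ) + 1) / 2) * π * Gamma (j + (μ : ℝ) + 1))
            * (-2 / Gamma (-(1 / 2))) * B)
          * ((cos ϑ + cos φ) / 2) ^ (((μ : ℝ) + 1) / 2)
          * gegenbauerCt j (((μ : ℝ) + 1) / 2) (cos ϑ)
          * gegenbauerCt (j + (μ + 1) / 2) 0 (cos φ) := by
  obtain ⟨N, rfl⟩ := hμ
  simp only [rpow_natCast] at hL2 ⊢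
  have hu_eq := eqOn_laguerreFun_of_tendsto hu hL2 heig hB
  have hhalf : ((2 * N + 1 : ℕ) : ℝ) / 2 = N + 1 / 2 := by push_cast; ring
  have hhalf_succ : (((2 * N + 1 : ℕ) : ℝ) + 1) / 2 = N + 1 := by push_cast; ring
  have hindex : j + (2 * N + 1 + 1) / 2 = j + N + 1 := by lia
  have hchoose : ((j + (2 * N + 1)).choose j : ℝ) ≠ 0 :=
    Nat.cast_ne_zero.mpr (Nat.choose_pos (Nat.le_add_right j _)).ne'
  calc
    _ = ∫ x in Ioi (0 : ℝ), B / (j + (2 * N + 1)).choose j * (laguerreFun j (2 * N + 1) x *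
          besselJt (N + 1 / 2) (sin ϑ / (cos ϑ + cos φ) * x) *
          besselJt (-(1 / 2)) (sin φ / (cos ϑ + cos φ) * x) * x ^ (2 * N + 1)) := by
      refine setIntegral_congr_fun measurableSet_Ioi fun x hx => ?_
      simp only [hu_eq hx, hhalf]
      ring
    _ = _ := by
      rw [integral_const_mul, integral_laguerreFun_mul_besselJt hS.ne' N j,
        ← gamma_constant_mul_choose N j, hhalf_succ, hindex, ← Nat.cast_add_one, rpow_natCast]
      field_simp

/-- **Theorem B, case `ν = −1`.** -/
theorem theoremB_nu_neg_one (μ : ℕ) (hμ : Odd μ) (hμ1 : 1 ≤ μ) (j : ℕ) (u : ℝ → ℝ)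
    (hu_smooth : ContDiffOn ℝ (⊤ : ℕ∞) u (Set.Ioi 0))
    (hu_L2 : MeasureTheory.IntegrableOn
      (fun x => u x ^ 2 * x ^ (μ : ℝ)) (Set.Ioi 0))
    (hu_eig : ∀ x > (0 : ℝ), Dop μ (-1) u x = 4 * j * (j + (μ : ℝ) + 1) * u x)
    (B : ℝ) (hB : Filter.Tendsto u (nhdsWithin 0 (Set.Ioi 0)) (nhds B)) :
    ∀ ϑ ∈ Set.Icc (0 : ℝ) Real.pi, ∀ φ ∈ Set.Icc (0 : ℝ) Real.pi,
      Real.cos ϑ + Real.cos φ > 0 →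
      ∫ x in Set.Ioi (0 : ℝ),
          u x * besselJt ((μ : ℝ) / 2) (Real.sin ϑ / (Real.cos ϑ + Real.cos φ) * x)
            * besselJt (-(1 / 2)) (Real.sin φ / (Real.cos ϑ + Real.cos φ) * x)
            * x ^ (μ : ℝ)
        = ((-1) ^ j * (j.factorial * (2 : ℝ) ^ (2 * (μ : ℝ) - 1)
                * Real.Gamma (((μ : ℝ) + 2) / 2) * Real.Gamma (((μ : ℝ) + 1) / 2)
                * Real.Gamma (j + ((μ : ℝ) + 3) / 2))
              / (Real.Gamma (j + ((μ : ℝ) + 1) / 2) * Real.pi * Real.Gamma (j + (μ : ℝ) + 1))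
              * (-2 / Real.Gamma (-(1 / 2))) * B)
            * ((Real.cos ϑ + Real.cos φ) / 2) ^ (((μ : ℝ) + 1) / 2)
            * gegenbauerCt j (((μ : ℝ) + 1) / 2) (Real.cos ϑ)
            * gegenbauerCt (j + (μ + 1) / 2) 0 (Real.cos φ) := by
  exact fun ϑ _ φ _ => theoremB_nu_neg_one_general μ hμ j u (contDiffOn_infty.mp hu_smooth 4)
    hu_L2 hu_eig B hB ϑ φ
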